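/- Let d ≥ 2 and let K : ℝ^d → ℝ be continuous, isotropic, positive definite, whose radial profile is regularly varying (at infinity) with index α ∈ [0,1]; in the case α = 1 assume moreover K(x) ∼ x^{−1}(log x)^{−γ} as x → ∞ for some γ < 1; assume also that sup_{y ≥ x ≥ r} K(y)/K(x) − 1 → 0 as r → ∞. Let r(R) → ∞ and s(R) → ∞ be functions with s(R) ≤ r(R) ≤ R and, as R → ∞: if α ∈ [0,1), r(R) = o(R) and r(R)K(s(R)) = o(R K(R)); if α = 1, r(R) = R^{o(1)} and r(R)K(s(R))(log s(R)) = o(R K(R)(log R)). Then for every ε > 0 there exists ρ₀ ∈ (0,1) such that for every ρ ∈ (ρ₀, 1), liminf_{R → ∞} inf Cap_K(∪_i D_i) / Cap_K([0,R] × {0}^{d−1}) ≥ 1 − ε, where the infimum is over all finite collections {D_i}_{1 ≤ i ≤ n} of translated copies of the ball B(s(R)) with n ≥ ⌊ρ R / r(R)⌋ whose centres {c_i}_{1 ≤ i ≤ n} satisfy |c_i − c_j| ≥ |i−j| r(R) for all i, j. -/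

import Mathlib

open Filter MeasureTheory Asymptotics

/-- A function `L` is slowly varying (at infinity) if it is continuous and strictly positive
on `(0,∞)` and `L(ax)/L(x) → 1` as `x → ∞` for every `a > 0`. -/
def SlowlyVarying (L : ℝ → ℝ) : Prop :=
  ContinuousOn L (Set.Ioi 0) ∧ (∀ x : ℝ, 0 < x → 0 < L x) ∧
    ∀ a : ℝ, 0 < a → Tendsto (fun x => L (a * x) / L x) atTop (nhds 1)

/-- A continuous function `h` on `(0,∞)` is regularly varying (at infinity) with index `α`
if `h(x) ∼ x^(-α) L(x)` as `x → ∞` for some slowly varying `L`. -/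
def RegularlyVarying (h : ℝ → ℝ) (α : ℝ) : Prop :=
  ContinuousOn h (Set.Ioi 0) ∧
    ∃ L : ℝ → ℝ, SlowlyVarying L ∧
      Tendsto (fun x => h x / (x ^ (-α) * L x)) atTop (nhds 1)

/-- A kernel `K : ℝ^d → ℝ` is positive definite if all quadratic forms
`∑ i j, c i * c j * K (x i - x j)` are nonnegative. -/
def IsPosDefKernel {d : ℕ} (K : EuclideanSpace ℝ (Fin d) → ℝ) : Prop :=
  ∀ (n : ℕ) (x : Fin n → EuclideanSpace ℝ (Fin d)) (c : Fin n → ℝ),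
    0 ≤ ∑ i : Fin n, ∑ j : Fin n, c i * c j * K (x i - x j)

/-- The energy `E_K(μ) = ∫∫ K(x-y) dμ(x) dμ(y)`. -/
noncomputable def energyE {d : ℕ} (K : EuclideanSpace ℝ (Fin d) → ℝ)
    (μ : Measure (EuclideanSpace ℝ (Fin d))) : ℝ :=
  ∫ x, ∫ y, K (x - y) ∂μ ∂μ

/-- The capacity of `D` with respect to `K`: the reciprocal of the minimal energy of a
Borel probability measure supported on `D`. -/
noncomputable def capacityE {d : ℕ} (K : EuclideanSpace ℝ (Fin d) → ℝ)
    (D : Set (EuclideanSpace ℝ (Fin d))) : ℝ :=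
  (sInf {e : ℝ | ∃ μ : Measure (EuclideanSpace ℝ (Fin d)),
      IsProbabilityMeasure μ ∧ μ Dᶜ = 0 ∧ e = energyE K μ})⁻¹

/-- Embedding of a subset of `ℝ` into `ℝ^d` as `S × {0}^{d-1}`. -/
def lineEmbed (d : ℕ) (S : Set ℝ) : Set (EuclideanSpace ℝ (Fin d)) :=
  {x | ∀ i : Fin d, if (i : ℕ) = 0 then x i ∈ S else x i = 0}

/-- Bounded measurable functions on a finite measure space are integrable. -/
lemma aux_int {Ω : Type*} [MeasurableSpace Ω] (P : Measure Ω) [IsFiniteMeasure P] {f : Ω → ℝ}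
    (hf : Measurable f) {C : ℝ} (hC : ∀ x, |f x| ≤ C) : Integrable f P :=
  Integrable.of_bound hf.aestronglyMeasurable C (Eventually.of_forall hC)

/-- The integral of a bounded function against a probability measure is bounded. -/
lemma aux_bd {Ω : Type*} [MeasurableSpace Ω] (P : Measure Ω) [IsProbabilityMeasure P] {f : Ω → ℝ}
    {C : ℝ} (hC : ∀ x, |f x| ≤ C) : |∫ x, f x ∂P| ≤ C := by
  have := norm_integral_le_of_norm_le_const (μ := P) (f := f) (C := C) (Eventually.of_forall hC)
  simpa using this

lemma posint {Ω : Type*} [MeasurableSpace Ω] (P : Measure Ω) [IsProbabilityMeasure P]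
    (F : Ω → Ω → ℝ) (hF : Measurable (fun p : Ω × Ω => F p.1 p.2)) (C : ℝ)
    (hC : ∀ x y, |F x y| ≤ C)
    (hpos : ∀ (n : ℕ) (ω : Fin n → Ω), 0 ≤ ∑ i, ∑ j, F (ω i) (ω j)) :
    0 ≤ ∫ x, ∫ y, F x y ∂P ∂P := by
  set I := ∫ x, ∫ y, F x y ∂P ∂P with hI
  have key : ∀ n : ℕ, 0 ≤ (n : ℝ) * C + (n : ℝ) * (n - 1) * I := by
    intro n
    let Q : Measure (Fin n → Ω) := Measure.pi (fun _ => P)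
    have hm : ∀ i j : Fin n, Measurable (fun ω : Fin n → Ω => F (ω i) (ω j)) := fun i j =>
      hF.comp (f := fun ω : Fin n → Ω => (ω i, ω j)) (by fun_prop)
    have hint : ∀ i j : Fin n, Integrable (fun ω : Fin n → Ω => F (ω i) (ω j)) Q := fun i j =>
      aux_int Q (hm i j) (fun ω => hC _ _)
    have h0 : 0 ≤ ∫ ω, ∑ i, ∑ j, F (ω i) (ω j) ∂Q := integral_nonneg (fun ω => hpos n ω)
    rw [integral_finsetSum _ (fun i _ => integrable_finsetSum _ (fun j _ => hint i j))] at h0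
    simp_rw [integral_finsetSum _ (fun j _ => hint _ j)] at h0
    have hoff : ∀ i j : Fin n, i ≠ j → ∫ ω, F (ω i) (ω j) ∂Q = I := by
      intro i j hij
      have hind : ProbabilityTheory.IndepFun (fun ω : Fin n → Ω => ω i) (fun ω => ω j) Q :=
        (ProbabilityTheory.iIndepFun_pi (μ := fun _ : Fin n => P) (X := fun _ => id)
          (fun _ => aemeasurable_id)).indepFun hij
      have hmap := (ProbabilityTheory.indepFun_iff_map_prod_eq_prod_map_map
        (measurable_pi_apply i).aemeasurable (measurable_pi_apply j).aemeasurable).1 hind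
      rw [(measurePreserving_eval (fun _ : Fin n => P) i).map_eq,
        (measurePreserving_eval (fun _ : Fin n => P) j).map_eq] at hmap
      have h1 : ∫ ω, F (ω i) (ω j) ∂Q = ∫ p, F p.1 p.2 ∂(P.prod P) := by
        rw [← hmap, integral_map (by fun_prop) hF.aestronglyMeasurable]
      rw [h1, integral_prod _ (aux_int _ hF (fun p => hC _ _))]
    have hdiag : ∀ i : Fin n, ∫ ω, F (ω i) (ω i) ∂Q ≤ C := fun i =>
      (le_abs_self _).trans (aux_bd Q (fun ω => hC _ _))
    refine h0.trans ?_
    have : ∀ i : Fin n, ∑ j, ∫ ω, F (ω i) (ω j) ∂Q ≤ C + ((n : ℝ) - 1) * I := by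
      intro i
      rw [← Finset.add_sum_erase _ _ (Finset.mem_univ i)]
      refine add_le_add (hdiag i) (le_of_eq ?_)
      rw [Finset.sum_congr rfl (fun j hj => hoff i j (Finset.ne_of_mem_erase hj).symm)]
      have hn : 1 ≤ n := by have := i.2; omega
      simp [Finset.card_erase_of_mem, Nat.cast_sub hn]
    refine (Finset.sum_le_sum (fun i _ => this i)).trans (le_of_eq ?_)
    simp; ring
  by_contra hneg
  push Not at hneg
  obtain ⟨n, hn⟩ := exists_nat_gt (C / (-I) + 1)
  have hC0 : 0 ≤ C := by
    obtain ⟨x⟩ : Nonempty Ω := nonempty_of_isProbabilityMeasure P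
    exact (abs_nonneg _).trans (hC x x)
  have hpos' : 0 < -I := by linarith
  have h1 : C < ((n : ℝ) - 1) * (-I) := by
    have : C / (-I) < (n : ℝ) - 1 := by linarith
    rwa [div_lt_iff₀ hpos'] at this
  have hn0 : 0 < (n : ℝ) := by
    have : 0 ≤ C / (-I) := by positivity
    linarith
  have := key n
  nlinarith

section kernel
variable {d : ℕ} {K : EuclideanSpace ℝ (Fin d) → ℝ}

lemma K_zero_nonneg (hpd : IsPosDefKernel K) : 0 ≤ K 0 := by
  simpa using hpd 1 (fun _ => 0) (fun _ => 1)

lemma K_bound (hpd : IsPosDefKernel K) (hev : ∀ x, K (-x) = K x) (x) : |K x| ≤ K 0 := by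
  have h1 := hpd 2 ![x, 0] ![1, 1]
  have h2 := hpd 2 ![x, 0] ![1, -1]
  have := hev x
  simp [Fin.sum_univ_two] at h1 h2
  rw [abs_le]; constructor <;> linarith

lemma pot_meas {X Y : Type*} [MeasurableSpace X] [MeasurableSpace Y] (ρ : Measure Y)
    [IsProbabilityMeasure ρ] (hcont : Continuous K) (u : X → EuclideanSpace ℝ (Fin d))
    (v : Y → EuclideanSpace ℝ (Fin d)) (hu : Measurable u) (hv : Measurable v) :
    Measurable (fun x => ∫ y, K (u x - v y) ∂ρ) := by
  have hKm : Measurable K := hcont.measurable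
  have : StronglyMeasurable (fun p : X × Y => K (u p.1 - v p.2)) :=
    Measurable.stronglyMeasurable (by fun_prop)
  exact (this.integral_prod_right').measurable

lemma int_four {X : Type*} [MeasurableSpace X] (ρ : Measure X) {a b c e : X → ℝ}
    (ha : Integrable a ρ) (hb : Integrable b ρ) (hc : Integrable c ρ) (he : Integrable e ρ) :
    ∫ x, (a x - b x - c x + e x) ∂ρ
      = (∫ x, a x ∂ρ) - (∫ x, b x ∂ρ) - (∫ x, c x ∂ρ) + ∫ x, e x ∂ρ := by
  have h1 := integral_add ((ha.sub hb).sub hc) he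
  have h2 := integral_sub (ha.sub hb) hc
  have h3 := integral_sub ha hb
  simp only [Pi.sub_apply] at h1 h2 h3
  rw [h1, h2, h3]

/-- Quadratic form positivity for two random vectors. -/
lemma cs {A B : Type*} [MeasurableSpace A] [MeasurableSpace B] (μ : Measure A) (ν : Measure B)
    [IsProbabilityMeasure μ] [IsProbabilityMeasure ν]
    (hcont : Continuous K) (hpd : IsPosDefKernel K) (hev : ∀ x, K (-x) = K x)
    (f : A → EuclideanSpace ℝ (Fin d)) (g : B → EuclideanSpace ℝ (Fin d))
    (hf : Measurable f) (hg : Measurable g) (t : ℝ) :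
    0 ≤ (∫ a, ∫ a', K (f a - f a') ∂μ ∂μ) - 2 * t * (∫ a, ∫ b, K (f a - g b) ∂ν ∂μ)
      + t ^ 2 * ∫ b, ∫ b', K (g b - g b') ∂ν ∂ν := by
  have hKm : Measurable K := hcont.measurable
  have hb := K_bound hpd hev
  have hsw : ∫ b, ∫ a, K (g b - f a) ∂μ ∂ν = ∫ a, ∫ b, K (f a - g b) ∂ν ∂μ := by
    rw [integral_integral_swap]
    · refine integral_congr_ae (Eventually.of_forall fun a => ?_)
      refine integral_congr_ae (Eventually.of_forall fun b => ?_)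
      simp only
      rw [← hev, neg_sub]
    · exact aux_int _ (by simp only [Function.uncurry_def]; fun_prop) (fun p => hb _)
  let F : A × B → A × B → ℝ := fun p q =>
    K (f p.1 - f q.1) - t * K (f p.1 - g q.2) - t * K (g p.2 - f q.1) + t ^ 2 * K (g p.2 - g q.2)
  have hpos := posint (μ.prod ν) F (by fun_prop) (K 0 + |t| * K 0 + |t| * K 0 + |t ^ 2| * K 0) ?_ ?_
  · have e1 : ∀ p : A × B, ∫ q, F p q ∂(μ.prod ν) = (∫ a', K (f p.1 - f a') ∂μ)
        - t * (∫ b, K (f p.1 - g b) ∂ν) - t * (∫ a, K (g p.2 - f a) ∂μ)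
        + t ^ 2 * (∫ b, K (g p.2 - g b) ∂ν) := by
      intro p
      have i1 : Integrable (fun q : A × B => K (f p.1 - f q.1)) (μ.prod ν) :=
        aux_int _ (by fun_prop) (fun p => hb _)
      have i2 : Integrable (fun q : A × B => t * K (f p.1 - g q.2)) (μ.prod ν) :=
        (aux_int _ (by fun_prop) (fun p => hb _)).const_mul t
      have i3 : Integrable (fun q : A × B => t * K (g p.2 - f q.1)) (μ.prod ν) :=
        (aux_int _ (by fun_prop) (fun p => hb _)).const_mul t
      have i4 : Integrable (fun q : A × B => t ^ 2 * K (g p.2 - g q.2)) (μ.prod ν) :=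
        (aux_int _ (by fun_prop) (fun p => hb _)).const_mul _
      simp only [F]
      rw [int_four _ i1 i2 i3 i4]
      simp only [integral_const_mul]
      rw [integral_fun_fst (fun a => K (f p.1 - f a)), integral_fun_snd (fun b => K (f p.1 - g b)),
        integral_fun_fst (fun a => K (g p.2 - f a)), integral_fun_snd (fun b => K (g p.2 - g b))]
      simp
    simp_rw [e1] at hpos
    have m1 : Measurable (fun x => ∫ y, K (f x - f y) ∂μ) := pot_meas μ hcont f f hf hf
    have m2 : Measurable (fun x => ∫ y, K (f x - g y) ∂ν) := pot_meas ν hcont f g hf hg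
    have m3 : Measurable (fun x => ∫ y, K (g x - f y) ∂μ) := pot_meas μ hcont g f hg hf
    have m4 : Measurable (fun x => ∫ y, K (g x - g y) ∂ν) := pot_meas ν hcont g g hg hg
    have i1 : Integrable (fun q : A × B => ∫ y, K (f q.1 - f y) ∂μ) (μ.prod ν) :=
        aux_int _ (m1.comp measurable_fst) (fun p => aux_bd _ (fun _ => hb _))
    have i2 : Integrable (fun q : A × B => t * ∫ y, K (f q.1 - g y) ∂ν) (μ.prod ν) :=
        (aux_int _ (m2.comp measurable_fst) (fun p => aux_bd _ (fun _ => hb _))).const_mul t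
    have i3 : Integrable (fun q : A × B => t * ∫ y, K (g q.2 - f y) ∂μ) (μ.prod ν) :=
        (aux_int _ (m3.comp measurable_snd) (fun p => aux_bd _ (fun _ => hb _))).const_mul t
    have i4 : Integrable (fun q : A × B => t ^ 2 * ∫ y, K (g q.2 - g y) ∂ν) (μ.prod ν) :=
        (aux_int _ (m4.comp measurable_snd) (fun p => aux_bd _ (fun _ => hb _))).const_mul _
    rw [int_four _ i1 i2 i3 i4] at hpos
    simp only [integral_const_mul] at hpos
    rw [integral_fun_fst (fun x => ∫ y, K (f x - f y) ∂μ),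
      integral_fun_fst (fun x => ∫ y, K (f x - g y) ∂ν),
      integral_fun_snd (fun x => ∫ y, K (g x - f y) ∂μ),
      integral_fun_snd (fun x => ∫ y, K (g x - g y) ∂ν), hsw] at hpos
    simp at hpos
    linarith
  · intro p q
    simp only [F]
    have h1 := hb (f p.1 - f q.1)
    have h2 : |t * K (f p.1 - g q.2)| ≤ |t| * K 0 := by
      rw [abs_mul]; exact mul_le_mul_of_nonneg_left (hb _) (abs_nonneg _)
    have h3 : |t * K (g p.2 - f q.1)| ≤ |t| * K 0 := by
      rw [abs_mul]; exact mul_le_mul_of_nonneg_left (hb _) (abs_nonneg _)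
    have h4 : |t ^ 2 * K (g p.2 - g q.2)| ≤ |t ^ 2| * K 0 := by
      rw [abs_mul]; exact mul_le_mul_of_nonneg_left (hb _) (abs_nonneg _)
    rw [abs_le] at *
    constructor <;> linarith
  · intro n ω
    have := hpd (n + n) (Fin.append (fun i => f (ω i).1) (fun i => g (ω i).2))
      (Fin.append (fun _ => 1) (fun _ => -t))
    simp only [Fin.sum_univ_add, Fin.append_left, Fin.append_right] at this
    refine this.trans (le_of_eq ?_)
    simp only [F, Finset.sum_add_distrib, Finset.sum_sub_distrib, ← Finset.mul_sum]
    simp only [one_mul, mul_one, neg_mul, mul_neg, neg_neg, mul_assoc]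
    ring

end kernel

/-- Absolute value of the even extension of the radial profile. -/
noncomputable def gk (k : ℝ → ℝ) (x : ℝ) : ℝ := |k (|x|)|

/-- Primitive of `gk`. -/
noncomputable def Jk (k : ℝ → ℝ) (x : ℝ) : ℝ := ∫ t in (0 : ℝ)..x, gk k t

lemma rv_pos {k : ℝ → ℝ} {α : ℝ} (h : RegularlyVarying k α) : ∀ᶠ x in atTop, 0 < k x := by
  obtain ⟨_, L, ⟨_, hL, _⟩, hlim⟩ := h
  filter_upwards [hlim.eventually (lt_mem_nhds (show (0 : ℝ) < 1 by norm_num)),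
    eventually_gt_atTop 0] with x hx hx0
  have hd : 0 < x ^ (-α) * L x := mul_pos (Real.rpow_pos_of_pos hx0 _) (hL x hx0)
  exact (div_pos_iff_of_pos_right hd).1 hx

lemma rv_ratio {k : ℝ → ℝ} {α : ℝ} (h : RegularlyVarying k α) {a : ℝ} (ha : 0 < a) :
    Tendsto (fun x => k (a * x) / k x) atTop (nhds (a ^ (-α))) := by
  have hpos := rv_pos h
  obtain ⟨_, L, ⟨_, hL, hslow⟩, hlim⟩ := h
  have hat : Tendsto (fun x : ℝ => a * x) atTop atTop := tendsto_id.const_mul_atTop ha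
  have h1 := (((hlim.comp hat).mul (hlim.inv₀ one_ne_zero)).mul (hslow a ha)).mul_const (a ^ (-α))
  simp only [inv_one, one_mul, mul_one] at h1
  refine h1.congr' ?_
  filter_upwards [hpos, eventually_gt_atTop 0] with x hx hx0
  have h2 := hL x hx0
  have h3 := hL (a * x) (by positivity)
  have h4 : 0 < x ^ (-α) := Real.rpow_pos_of_pos hx0 _
  have h5 : 0 < a ^ (-α) := Real.rpow_pos_of_pos ha _
  simp only [Function.comp]
  rw [Real.mul_rpow ha.le hx0.le]
  field_simp

lemma almost_mono {k : ℝ → ℝ} (hp : ∀ᶠ x in atTop, 0 < k x)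
    (hratio : ∀ ε : ℝ, 0 < ε → ∃ r₀ : ℝ, ∀ x y : ℝ, r₀ ≤ x → x ≤ y → k y / k x - 1 ≤ ε)
    (ε : ℝ) (hε : 0 < ε) :
    ∃ r₀ : ℝ, 0 < r₀ ∧ (∀ x, r₀ ≤ x → 0 < k x) ∧
      ∀ x y : ℝ, r₀ ≤ x → x ≤ y → k y ≤ (1 + ε) * k x := by
  obtain ⟨a, ha⟩ := eventually_atTop.1 hp
  obtain ⟨b, hb⟩ := hratio ε hε
  refine ⟨max 1 (max a b), by positivity, fun x hx => ha x ?_, fun x y hx hxy => ?_⟩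
  · exact ((le_max_left _ _).trans (le_max_right _ _)).trans hx
  · have h1 := hb x y (((le_max_right _ _).trans (le_max_right _ _)).trans hx) hxy
    have h2 : 0 < k x := ha x (((le_max_left _ _).trans (le_max_right _ _)).trans hx)
    rw [sub_le_iff_le_add, div_le_iff₀ h2] at h1
    linarith

section J
variable {k : ℝ → ℝ}

lemma gk_nonneg (x : ℝ) : 0 ≤ gk k x := abs_nonneg _

lemma gk_even (x : ℝ) : gk k (-x) = gk k x := by simp [gk]

lemma Jk_sub (hg : Continuous (gk k)) (x y : ℝ) : Jk k y - Jk k x = ∫ t in x..y, gk k t := by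
  unfold Jk
  rw [intervalIntegral.integral_interval_sub_left] <;> exact hg.intervalIntegrable _ _

lemma Jk_mono (hg : Continuous (gk k)) : Monotone (Jk k) := by
  intro x y hxy
  have := Jk_sub hg x y
  have h2 : 0 ≤ ∫ t in x..y, gk k t :=
    intervalIntegral.integral_nonneg hxy (fun t _ => gk_nonneg t)
  linarith

lemma Jk_zero : Jk k 0 = 0 := by simp [Jk]

lemma Jk_nonneg (hg : Continuous (gk k)) {x : ℝ} (hx : 0 ≤ x) : 0 ≤ Jk k x := by
  rw [← Jk_zero (k := k)]; exact Jk_mono hg hx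

lemma gk_eq {r₀ : ℝ} (h0 : 0 < r₀) (hp : ∀ x, r₀ ≤ x → 0 < k x) {x : ℝ} (hx : r₀ ≤ x) :
    gk k x = k x := by
  unfold gk
  rw [abs_of_nonneg (h0.le.trans hx), abs_of_pos (hp x hx)]

lemma Jk_lower (hg : Continuous (gk k)) {r₀ : ℝ} (h0 : 0 < r₀) (hp : ∀ x, r₀ ≤ x → 0 < k x)
    (hm : ∀ x y : ℝ, r₀ ≤ x → x ≤ y → k y ≤ 2 * k x) {x y : ℝ} (hx : r₀ ≤ x) (hxy : x ≤ y) :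
    (y - x) * (k y / 2) ≤ Jk k y - Jk k x := by
  rw [Jk_sub hg]
  have : ∫ t in x..y, (k y / 2) = (y - x) * (k y / 2) := by simp; ring
  rw [← this]
  refine intervalIntegral.integral_mono_on hxy (by simp) (hg.intervalIntegrable _ _) ?_
  intro t ht
  rw [gk_eq h0 hp (hx.trans ht.1)]
  have := hm t y (hx.trans ht.1) ht.2
  linarith

lemma Jk_upper (hg : Continuous (gk k)) {r₀ : ℝ} (h0 : 0 < r₀) (hp : ∀ x, r₀ ≤ x → 0 < k x)
    (hm : ∀ x y : ℝ, r₀ ≤ x → x ≤ y → k y ≤ 2 * k x) {x y : ℝ} (hx : r₀ ≤ x) (hxy : x ≤ y) :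
    Jk k y - Jk k x ≤ (y - x) * (2 * k x) := by
  rw [Jk_sub hg]
  have : ∫ t in x..y, (2 * k x) = (y - x) * (2 * k x) := by simp; ring
  rw [← this]
  refine intervalIntegral.integral_mono_on hxy (hg.intervalIntegrable _ _) (by simp) ?_
  intro t ht
  rw [gk_eq h0 hp (hx.trans ht.1)]
  exact hm x t hx ht.1

lemma Jk_ge (hg : Continuous (gk k)) {r₀ : ℝ} (h0 : 0 < r₀) (hp : ∀ x, r₀ ≤ x → 0 < k x)
    (hm : ∀ x y : ℝ, r₀ ≤ x → x ≤ y → k y ≤ 2 * k x) {x : ℝ} (hx : 2 * r₀ ≤ x) :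
    x * k x ≤ 4 * Jk k x := by
  have h1 := Jk_lower hg h0 hp hm (x := x / 2) (y := x) (by linarith) (by linarith)
  have h2 := Jk_nonneg hg (x := x / 2) (by linarith)
  nlinarith

lemma Jk_double (hg : Continuous (gk k)) {r₀ : ℝ} (h0 : 0 < r₀) (hp : ∀ x, r₀ ≤ x → 0 < k x)
    (hm : ∀ x y : ℝ, r₀ ≤ x → x ≤ y → k y ≤ 2 * k x) {x : ℝ} (hx : 2 * r₀ ≤ x) :
    Jk k (2 * x) ≤ 9 * Jk k x := by
  have h1 := Jk_ge hg h0 hp hm hx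
  have h2 := Jk_upper hg h0 hp hm (x := x) (y := 2 * x) (by linarith) (by linarith)
  nlinarith

/-- Karamata-type bounds in the case `α < 1`. -/
lemma asym_lt (hg : Continuous (gk k)) {r₀ : ℝ} (h0 : 0 < r₀) (hp : ∀ x, r₀ ≤ x → 0 < k x)
    (hm : ∀ x y : ℝ, r₀ ≤ x → x ≤ y → k y ≤ 2 * k x) {α : ℝ} (hα : α < 1)
    (hrv : RegularlyVarying k α) :
    Tendsto (Jk k) atTop atTop ∧ (Jk k) =O[atTop] (fun x => x * k x) := by
  have hq : (1 : ℝ) / 2 < 2 ^ (-α) := by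
    rw [show (1 : ℝ) / 2 = 2 ^ (-1 : ℝ) by rw [Real.rpow_neg_one]; norm_num]
    exact Real.rpow_lt_rpow_of_exponent_lt (by norm_num) (by linarith)
  obtain ⟨θ', hθ1, hθ2⟩ := exists_between hq
  obtain ⟨x1, hx1⟩ := eventually_atTop.1 ((rv_ratio hrv (show (0 : ℝ) < 2 by norm_num)).eventually
    (lt_mem_nhds hθ2))
  set x2 := max x1 (2 * r₀) with hx2
  have hx2r : 2 * r₀ ≤ x2 := le_max_right _ _
  have hx2p : 0 < x2 := by linarith
  set η := 2 * θ' - 1 with hη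
  have hη0 : 0 < η := by linarith
  have grow : ∀ x, x2 ≤ x → (1 + η) * (x * k x) ≤ 2 * x * k (2 * x) := by
    intro x hx
    have h1 := hx1 x ((le_max_left _ _).trans hx)
    have h2 := hp x (by linarith)
    rw [lt_div_iff₀ h2] at h1
    have : 0 < x := by linarith
    nlinarith
  obtain ⟨C, hC1, hC2⟩ : ∃ C : ℝ, 2 ≤ C * η ∧ Jk k (2 * x2) * 2 ≤ C * (x2 * k (2 * x2)) := by
    have hk2 : 0 < x2 * k (2 * x2) := mul_pos hx2p (hp _ (by linarith))
    refine ⟨max (2 / η) (Jk k (2 * x2) * 2 / (x2 * k (2 * x2))), ?_, ?_⟩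
    · rw [← div_le_iff₀ hη0]; exact le_max_left _ _
    · rw [← div_le_iff₀ hk2]; exact le_max_right _ _
  have hC0 : 0 < C := by by_contra h; push Not at h; nlinarith
  have main : ∀ n : ℕ, ∀ x, x2 ≤ x → x ≤ 2 ^ (n + 1) * x2 → Jk k x ≤ C * (x * k x) := by
    intro n
    induction n with
    | zero =>
      intro x h1 h2
      simp only [zero_add, pow_one] at h2
      have h3 := Jk_mono hg h2
      have h4 := hm x (2 * x2) (by linarith) h2
      have h5 : x2 * k (2 * x2) ≤ x * (2 * k x) :=
        mul_le_mul h1 h4 (hp _ (by linarith)).le (by linarith)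
      nlinarith
    | succ n ih =>
      intro x h1 h2
      by_cases hx : x ≤ 2 * x2
      · refine ih x h1 (hx.trans ?_)
        refine mul_le_mul_of_nonneg_right ?_ hx2p.le
        rw [pow_succ]
        have : (1 : ℝ) ≤ 2 ^ n := one_le_pow₀ (by norm_num)
        linarith
      · push Not at hx
        have h3 := ih (x / 2) (by linarith) (by rw [pow_succ] at h2; linarith)
        have h4 := grow (x / 2) (by linarith)
        have h5 := Jk_upper hg h0 hp hm (x := x / 2) (y := x) (by linarith) (by linarith)
        have h6 : 2 * (x / 2) = x := by ring
        rw [h6] at h4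
        have h7 : 0 < x / 2 * k (x / 2) := mul_pos (by linarith) (hp _ (by linarith))
        calc Jk k x ≤ (C + 2) * (x / 2 * k (x / 2)) := by linarith
          _ ≤ C * (1 + η) * (x / 2 * k (x / 2)) := by
            refine mul_le_mul_of_nonneg_right ?_ h7.le
            linarith
          _ ≤ C * (x * k x) := by
            rw [mul_assoc]; exact mul_le_mul_of_nonneg_left h4 hC0.le
  have bnd : ∀ x, x2 ≤ x → Jk k x ≤ C * (x * k x) := by
    intro x hx
    obtain ⟨n, hn⟩ := pow_unbounded_of_one_lt (x / x2) (show (1 : ℝ) < 2 by norm_num)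
    refine main n x hx ?_
    rw [div_lt_iff₀ hx2p] at hn
    rw [pow_succ]
    have : 0 < (2 : ℝ) ^ n * x2 := by positivity
    linarith
  constructor
  · set c := x2 * k x2 with hc
    have hc0 : 0 < c := mul_pos hx2p (hp _ (by linarith))
    have g1 : ∀ n : ℕ, c ≤ 2 ^ n * x2 * k (2 ^ n * x2) ∧ n * (c / 4) ≤ Jk k (2 ^ n * x2) := by
      intro n
      induction n with
      | zero => simp [hc]; exact Jk_nonneg hg hx2p.le
      | succ n ih =>
        obtain ⟨i1, i2⟩ := ih
        have hn : x2 ≤ 2 ^ n * x2 := by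
          have : (1 : ℝ) ≤ 2 ^ n := one_le_pow₀ (by norm_num)
          nlinarith
        have h1 := grow _ hn
        have h2 := Jk_lower hg h0 hp hm (x := 2 ^ n * x2) (y := 2 * (2 ^ n * x2)) (by linarith)
          (by linarith)
        have e : (2 : ℝ) ^ (n + 1) * x2 = 2 * (2 ^ n * x2) := by ring
        rw [e]
        have h3 : c ≤ 2 * (2 ^ n * x2) * k (2 * (2 ^ n * x2)) := by nlinarith
        refine ⟨h3, ?_⟩
        push_cast
        linarith
    refine tendsto_atTop_atTop_of_monotone (Jk_mono hg) (fun b => ?_)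
    obtain ⟨n, hn⟩ := exists_nat_gt (b / (c / 4))
    refine ⟨2 ^ n * x2, ?_⟩
    rw [div_lt_iff₀ (by positivity)] at hn
    exact hn.le.trans (g1 n).2
  · refine IsBigO.of_bound C ?_
    filter_upwards [eventually_ge_atTop x2] with x hx
    have h1 := bnd x hx
    have h2 := Jk_nonneg hg (x := x) (by linarith)
    have h3 : 0 < x * k x := mul_pos (by linarith) (hp _ (by linarith))
    rwa [Real.norm_of_nonneg h2, Real.norm_of_nonneg h3.le]

lemma asym_eq (hg : Continuous (gk k)) {r₀ : ℝ} (h0 : 0 < r₀) (hp : ∀ x, r₀ ≤ x → 0 < k x)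
    {γ : ℝ} (hγ : γ < 1)
    (hlim : Tendsto (fun x => k x / (x⁻¹ * Real.log x ^ (-γ))) atTop (nhds 1)) :
    Tendsto (Jk k) atTop atTop ∧ (Jk k) =O[atTop] (fun x => x * k x * Real.log x) ∧
      (fun x => x * k x * Real.log x) =O[atTop] (Jk k) := by
  have hγ' : 0 < 1 - γ := by linarith
  set ell : ℝ → ℝ := fun x => Real.log x ^ (1 - γ) with hell
  have hellT : Tendsto ell atTop atTop :=
    (tendsto_rpow_atTop hγ').comp Real.tendsto_log_atTop
  have ev : ∀ᶠ x in atTop, 1 < x ∧ r₀ ≤ x ∧ (1 / 2) * (x⁻¹ * Real.log x ^ (-γ)) ≤ k x ∧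
      k x ≤ 2 * (x⁻¹ * Real.log x ^ (-γ)) := by
    filter_upwards [hlim.eventually (lt_mem_nhds (show (1 / 2 : ℝ) < 1 by norm_num)),
      hlim.eventually (gt_mem_nhds (show (1 : ℝ) < 2 by norm_num)),
      eventually_gt_atTop 1, eventually_ge_atTop r₀] with x a b c e
    have : 0 < x⁻¹ * Real.log x ^ (-γ) :=
      mul_pos (by positivity) (Real.rpow_pos_of_pos (Real.log_pos c) _)
    rw [lt_div_iff₀ this] at a
    rw [div_lt_iff₀ this] at b
    exact ⟨c, e, a.le, b.le⟩
  obtain ⟨x1, hx1⟩ := eventually_atTop.1 ev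
  have hint : ∀ x, x1 ≤ x → ∫ t in x1..x, (t⁻¹ * Real.log t ^ (-γ)) =
      (ell x - ell x1) / (1 - γ) := by
    intro x hx
    have hd : ∀ t ∈ Set.uIcc x1 x, HasDerivAt (fun t => ell t / (1 - γ))
        (t⁻¹ * Real.log t ^ (-γ)) t := by
      intro t ht
      rw [Set.uIcc_of_le hx] at ht
      have h1 := (hx1 t ht.1).1
      have h2 := ((Real.hasDerivAt_log (show t ≠ 0 by linarith)).rpow_const (p := 1 - γ)
        (Or.inl (Real.log_pos h1).ne')).div_const (1 - γ)
      have e : t⁻¹ * Real.log t ^ (-γ)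
          = t⁻¹ * (1 - γ) * Real.log t ^ (1 - γ - 1) / (1 - γ) := by
        rw [show 1 - γ - 1 = -γ by ring]
        field_simp
      rw [e]
      exact h2
    rw [intervalIntegral.integral_eq_sub_of_hasDerivAt hd]
    · ring
    · refine ContinuousOn.intervalIntegrable ?_
      intro t ht
      rw [Set.uIcc_of_le hx] at ht
      have h1 := (hx1 t ht.1).1
      refine ContinuousAt.continuousWithinAt ?_
      refine (continuousAt_inv₀ (by linarith)).mul ?_
      exact (Real.continuousAt_log (by linarith)).rpow_const (Or.inl (Real.log_pos h1).ne')
  have hII : ∀ x, x1 ≤ x → IntervalIntegrable (fun t => t⁻¹ * Real.log t ^ (-γ)) volume x1 x := by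
    intro x hx
    refine ContinuousOn.intervalIntegrable ?_
    intro t ht
    rw [Set.uIcc_of_le hx] at ht
    have h1 := (hx1 t ht.1).1
    refine ContinuousAt.continuousWithinAt ?_
    refine (continuousAt_inv₀ (by linarith)).mul ?_
    exact (Real.continuousAt_log (by linarith)).rpow_const (Or.inl (Real.log_pos h1).ne')
  have up : ∀ x, x1 ≤ x → Jk k x ≤ Jk k x1 + 2 * ((ell x - ell x1) / (1 - γ)) := by
    intro x hx
    rw [← hint x hx, ← intervalIntegral.integral_const_mul]
    have : ∫ t in x1..x, gk k t ≤ ∫ t in x1..x, 2 * (t⁻¹ * Real.log t ^ (-γ)) := by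
      refine intervalIntegral.integral_mono_on hx (hg.intervalIntegrable _ _)
        ((hII x hx).const_mul 2) ?_
      intro t ht
      have h := hx1 t ht.1
      rw [gk_eq h0 hp h.2.1]
      exact h.2.2.2
    have := Jk_sub hg x1 x
    linarith
  have lo : ∀ x, x1 ≤ x → (1 / 2) * ((ell x - ell x1) / (1 - γ)) ≤ Jk k x - Jk k x1 := by
    intro x hx
    rw [← hint x hx, ← intervalIntegral.integral_const_mul, Jk_sub hg]
    refine intervalIntegral.integral_mono_on hx
        ((hII x hx).const_mul _) (hg.intervalIntegrable _ _) ?_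
    intro t ht
    have h := hx1 t ht.1
    rw [gk_eq h0 hp h.2.1]
    exact h.2.2.1
  have hx1p : 1 < x1 := (hx1 x1 le_rfl).1
  have hJ1 : 0 ≤ Jk k x1 := Jk_nonneg hg (by linarith)
  have hl1 : 0 ≤ ell x1 := Real.rpow_nonneg (Real.log_pos hx1p).le _
  have hw : ∀ x, x1 ≤ x → (1 / 2) * ell x ≤ x * k x * Real.log x ∧
      x * k x * Real.log x ≤ 2 * ell x := by
    intro x hx
    obtain ⟨a, b, c, e⟩ := hx1 x hx
    have hl := Real.log_pos a
    have hE : ell x = x * (x⁻¹ * Real.log x ^ (-γ)) * Real.log x := by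
      rw [← mul_assoc, mul_inv_cancel₀ (by linarith), one_mul, hell]
      simp only
      rw [sub_eq_neg_add, Real.rpow_add_one hl.ne']
    rw [hE]
    have hxl : 0 < x * Real.log x := by positivity
    constructor <;> nlinarith
  have hup' : ∀ᶠ x in atTop, Jk k x ≤ (1 + 2 / (1 - γ)) * ell x := by
    filter_upwards [hellT.eventually_ge_atTop (Jk k x1), eventually_ge_atTop x1] with x h1 h2
    have := up x h2
    have h3 : (ell x - ell x1) / (1 - γ) ≤ ell x / (1 - γ) := by gcongr; linarith
    have h4 : (1 + 2 / (1 - γ)) * ell x = ell x + 2 * (ell x / (1 - γ)) := by ring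
    linarith
  have hlo' : ∀ᶠ x in atTop, (1 / (4 * (1 - γ))) * ell x ≤ Jk k x := by
    filter_upwards [hellT.eventually_ge_atTop (2 * ell x1), eventually_ge_atTop x1] with x h1 h2
    have := lo x h2
    have h3 : (ell x / 2) / (1 - γ) ≤ (ell x - ell x1) / (1 - γ) := by gcongr; linarith
    have h4 : (1 / (4 * (1 - γ))) * ell x = 1 / 2 * ((ell x / 2) / (1 - γ)) := by
      field_simp; ring
    linarith
  refine ⟨tendsto_atTop_mono' _ hlo' (hellT.const_mul_atTop (by positivity)), ?_, ?_⟩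
  · refine IsBigO.of_bound ((1 + 2 / (1 - γ)) * 2) ?_
    filter_upwards [hup', eventually_ge_atTop x1] with x a b
    have h1 := (hw x b).1
    have h3 : 0 ≤ ell x := Real.rpow_nonneg (Real.log_pos (hx1 x b).1).le _
    have h2 := Jk_nonneg hg (x := x) (by linarith)
    rw [Real.norm_of_nonneg h2, Real.norm_of_nonneg (by linarith)]
    refine a.trans ?_
    rw [mul_assoc]
    refine mul_le_mul_of_nonneg_left (by linarith) (by positivity)
  · refine IsBigO.of_bound (8 * (1 - γ)) ?_
    filter_upwards [hlo', eventually_ge_atTop x1] with x a b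
    have h1 := hw x b
    have h3 : 0 ≤ ell x := Real.rpow_nonneg (Real.log_pos (hx1 x b).1).le _
    have h2 := Jk_nonneg hg (x := x) (by linarith)
    rw [Real.norm_of_nonneg h2, Real.norm_of_nonneg (by linarith)]
    refine h1.2.trans ?_
    have : 2 * ell x = 8 * (1 - γ) * ((1 / (4 * (1 - γ))) * ell x) := by field_simp; ring
    rw [this]
    exact mul_le_mul_of_nonneg_left a (by positivity)

lemma asym (hg : Continuous (gk k)) {r₀ : ℝ} (h0 : 0 < r₀) (hp : ∀ x, r₀ ≤ x → 0 < k x)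
    (hm : ∀ x y : ℝ, r₀ ≤ x → x ≤ y → k y ≤ 2 * k x) {α : ℝ} (hα1 : α ≤ 1)
    (hrv : RegularlyVarying k α)
    (hcrit : α = 1 → ∃ γ : ℝ, γ < 1 ∧
      Tendsto (fun x => k x / (x⁻¹ * Real.log x ^ (-γ))) atTop (nhds 1))
    (r s : ℝ → ℝ) (hr : Tendsto r atTop atTop) (hs : Tendsto s atTop atTop)
    (hcase0 : α < 1 →
      ((fun R => r R) =o[atTop] (fun R : ℝ => R)) ∧
      ((fun R => r R * k (s R)) =o[atTop] (fun R => R * k R)))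
    (hcase1 : α = 1 →
      (Tendsto (fun R => Real.log (max (r R) 2) / Real.log R) atTop (nhds 0)) ∧
      ((fun R => r R * k (s R) * Real.log (s R)) =o[atTop]
        (fun R => R * k R * Real.log R))) :
    Tendsto (Jk k) atTop atTop ∧ (fun R => r R / s R * Jk k (s R)) =o[atTop] (Jk k) ∧
      (fun R => r R) =o[atTop] (fun R : ℝ => R) := by
  rcases hα1.lt_or_eq with hlt | heq
  · obtain ⟨h1, h2⟩ := asym_lt hg h0 hp hm hlt hrv
    obtain ⟨h3, h4⟩ := hcase0 hlt
    refine ⟨h1, ?_, h3⟩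
    have h5 : (fun x => x * k x) =O[atTop] (Jk k) := by
      refine IsBigO.of_bound 4 ?_
      filter_upwards [eventually_ge_atTop (2 * r₀)] with x hx
      have a := Jk_ge hg h0 hp hm hx
      have b : 0 ≤ x * k x := mul_nonneg (by linarith) (hp _ (by linarith)).le
      rw [Real.norm_of_nonneg b, Real.norm_of_nonneg (by linarith)]
      exact a
    have h6 := (isBigO_refl (fun R => r R / s R) atTop).mul (h2.comp_tendsto hs)
    refine (h6.trans_isLittleO (h4.congr' ?_ EventuallyEq.rfl)).trans_isBigO h5
    filter_upwards [hs.eventually_gt_atTop 0] with R hR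
    simp only [Function.comp]
    field_simp
  · obtain ⟨γ, hγ, hlim⟩ := hcrit heq
    obtain ⟨h1, h2, h5⟩ := asym_eq hg h0 hp hγ hlim
    obtain ⟨h3, h4⟩ := hcase1 heq
    refine ⟨h1, ?_, ?_⟩
    · have h6 := (isBigO_refl (fun R => r R / s R) atTop).mul (h2.comp_tendsto hs)
      refine (h6.trans_isLittleO (h4.congr' ?_ EventuallyEq.rfl)).trans_isBigO h5
      filter_upwards [hs.eventually_gt_atTop 0] with R hR
      simp only [Function.comp]
      field_simp
    · have hb : (fun R => r R) =O[atTop] (fun R : ℝ => R ^ (1 / 2 : ℝ)) := by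
        refine IsBigO.of_bound 1 ?_
        filter_upwards [h3.eventually (gt_mem_nhds (show (0 : ℝ) < 1 / 2 by norm_num)),
          eventually_gt_atTop 1, hr.eventually_ge_atTop 2] with R a b c
        rw [max_eq_left c, div_lt_iff₀ (Real.log_pos b)] at a
        have hR : 0 < R := by linarith
        rw [Real.norm_of_nonneg (by linarith), Real.norm_of_nonneg (by positivity), one_mul]
        rw [← Real.log_le_log_iff (by linarith) (by positivity), Real.log_rpow hR]
        exact a.le
      refine hb.trans_isLittleO ?_
      refine (isLittleO_iff_tendsto' ?_).2 ?_
      · filter_upwards [eventually_gt_atTop 0] with R a b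
        linarith
      · refine (tendsto_rpow_neg_atTop (show (0 : ℝ) < 1 / 2 by norm_num)).congr' ?_
        filter_upwards [eventually_gt_atTop 0] with R a
        rw [show -(1 / 2 : ℝ) = 1 / 2 - 1 by norm_num, Real.rpow_sub_one a.ne']

end J

/-- Uniform measure on the unit interval. -/
noncomputable def UU : Measure ℝ := volume.restrict (Set.Ioc 0 1)

instance : IsProbabilityMeasure UU := ⟨by simp [UU]⟩

lemma UU_int (f : ℝ → ℝ) : ∫ u, f u ∂UU = ∫ u in (0 : ℝ)..1, f u := by
  rw [intervalIntegral.integral_of_le zero_le_one, UU]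

/-- Indicator of the interval `(-w, w)`. -/
noncomputable def ind (w z : ℝ) : ℝ := if |z| < w then 1 else 0

lemma ind_nonneg (w z : ℝ) : 0 ≤ ind w z := by unfold ind; split_ifs <;> norm_num

lemma ind_abs (w z : ℝ) : |ind w z| ≤ 1 := by unfold ind; split_ifs <;> norm_num

lemma ind_meas (w : ℝ) : Measurable (ind w) := by
  unfold ind
  exact Measurable.ite (measurableSet_lt (by fun_prop) (by fun_prop)) measurable_const
    measurable_const

lemma ind_int {R w : ℝ} (hR : 0 < R) (hw : 0 ≤ w) (c : ℝ) :
    ∫ u, ind w (c - R * u) ∂UU ≤ w * (2 / R) := by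
  have h1 : ∀ u, ind w (c - R * u) = Set.indicator (Set.Ioo ((c - w) / R) ((c + w) / R))
      (fun _ => (1 : ℝ)) u := by
    intro u
    have : |c - R * u| < w ↔ u ∈ Set.Ioo ((c - w) / R) ((c + w) / R) := by
      rw [Set.mem_Ioo, div_lt_iff₀ hR, lt_div_iff₀ hR, abs_lt]
      constructor
      · rintro ⟨a, b⟩; constructor <;> linarith
      · rintro ⟨a, b⟩; constructor <;> linarith
    unfold ind
    rw [Set.indicator_apply]
    simp only [this]
  simp_rw [h1]
  rw [integral_indicator measurableSet_Ioo]
  simp only [integral_const, smul_eq_mul, mul_one, measureReal_restrict_apply_univ]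
  have h2 : UU.real (Set.Ioo ((c - w) / R) ((c + w) / R)) ≤
      (volume : Measure ℝ).real (Set.Ioo ((c - w) / R) ((c + w) / R)) := by
    refine ENNReal.toReal_mono (by simp) ?_
    exact Measure.restrict_apply_le _ _
  refine h2.trans (le_of_eq ?_)
  rw [Real.volume_real_Ioo_of_le (by gcongr; linarith)]
  field_simp
  ring

section general

variable {A B : Type*} [MeasurableSpace A] [MeasurableSpace B]

lemma dbl_mono (P : Measure A) [IsProbabilityMeasure P] {p : A → Prop} (hp : ∀ᵐ a ∂P, p a)
    {f g : A → A → ℝ} (hf : Measurable (fun q : A × A => f q.1 q.2))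
    (hg : Measurable (fun q : A × A => g q.1 q.2)) {C D : ℝ} (hC : ∀ a b, |f a b| ≤ C)
    (hD : ∀ a b, |g a b| ≤ D) (h : ∀ a b, p a → p b → f a b ≤ g a b) :
    ∫ a, ∫ b, f a b ∂P ∂P ≤ ∫ a, ∫ b, g a b ∂P ∂P := by
  have mf := (hf.stronglyMeasurable.integral_prod_right' (ν := P)).measurable
  have mg := (hg.stronglyMeasurable.integral_prod_right' (ν := P)).measurable
  refine integral_mono_ae (aux_int _ mf (fun a => aux_bd _ (hC a)))
    (aux_int _ mg (fun a => aux_bd _ (hD a))) ?_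
  filter_upwards [hp] with a ha
  refine integral_mono_ae (aux_int _ (hf.comp (by fun_prop : Measurable (fun b => (a, b)))) (hC a))
    (aux_int _ (hg.comp (by fun_prop : Measurable (fun b => (a, b)))) (hD a)) ?_
  filter_upwards [hp] with b hb
  exact h a b ha hb

lemma quad_swap (P : Measure A) [IsProbabilityMeasure P] (Q : Measure B) [IsProbabilityMeasure Q]
    (G : A → B → A → B → ℝ)
    (hG : Measurable (fun q : (A × B) × (A × B) => G q.1.1 q.1.2 q.2.1 q.2.2)) {C : ℝ}
    (hC : ∀ a b a' b', |G a b a' b'| ≤ C) :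
    ∫ p, ∫ q, G p.1 p.2 q.1 q.2 ∂(P.prod Q) ∂(P.prod Q)
      = ∫ a, ∫ a', ∫ b, ∫ b', G a b a' b' ∂Q ∂Q ∂P ∂P := by
  have m1 := (hG.stronglyMeasurable.integral_prod_right' (ν := P.prod Q)).measurable
  rw [integral_prod _ (aux_int _ m1 (fun p => aux_bd _ (fun q => hC _ _ _ _)))]
  refine integral_congr_ae (Eventually.of_forall fun a => ?_)
  simp only
  have e1 : ∀ b, ∫ q, G a b q.1 q.2 ∂(P.prod Q) = ∫ a', ∫ b', G a b a' b' ∂Q ∂P := by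
    intro b
    rw [integral_prod _ (aux_int _ ?_ (fun q => hC _ _ _ _))]
    exact hG.comp (by fun_prop : Measurable (fun q : A × B => ((a, b), q)))
  simp_rw [e1]
  have m2 : Measurable (fun q : (B × A) × B => G a q.1.1 q.1.2 q.2) :=
    hG.comp (by fun_prop : Measurable (fun q : (B × A) × B => ((a, q.1.1), (q.1.2, q.2))))
  have m3 := (m2.stronglyMeasurable.integral_prod_right' (ν := Q)).measurable
  rw [integral_integral_swap]
  exact aux_int _ m3 (fun p => aux_bd _ (fun _ => hC _ _ _ _))

end general

section line
variable {d : ℕ} {K : EuclideanSpace ℝ (Fin d) → ℝ} {k : ℝ → ℝ}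

/-- A unit coordinate vector. -/
noncomputable def ev (i : Fin d) : EuclideanSpace ℝ (Fin d) := EuclideanSpace.single i 1

lemma ev_norm (i : Fin d) : ‖ev i‖ = 1 := by simp [ev]

lemma K_ev (hrad : ∀ x, K x = k ‖x‖) (i : Fin d) (a : ℝ) : K (a • ev i) = k |a| := by
  rw [hrad, norm_smul, ev_norm, mul_one, Real.norm_eq_abs]

lemma gk_cont (hcont : Continuous K) (hrad : ∀ x, K x = k ‖x‖) (i : Fin d) :
    Continuous (gk k) := by
  have : gk k = fun a => |K (a • ev i)| := by
    ext a; rw [K_ev hrad]; rfl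
  rw [this]
  fun_prop

lemma K_even (hrad : ∀ x, K x = k ‖x‖) (x) : K (-x) = K x := by rw [hrad, hrad, norm_neg]

lemma Jk_neg (_hg : Continuous (gk k)) (x : ℝ) : Jk k (-x) = - Jk k x := by
  unfold Jk
  have h := intervalIntegral.integral_comp_neg (a := 0) (b := x) (gk k)
  simp only [gk_even, neg_zero] at h
  rw [h, intervalIntegral.integral_symm]

lemma seg_energy (hcont : Continuous K) (hrad : ∀ x, K x = k ‖x‖) (hpd : IsPosDefKernel K)
    (i : Fin d) {l : ℝ} (hl : 0 < l) :
    ∫ u, ∫ u', K ((l * u) • ev i - (l * u') • ev i) ∂UU ∂UU ≤ 2 * Jk k l / l := by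
  have hg := gk_cont hcont hrad i
  have hKm : Measurable K := hcont.measurable
  have hb := K_bound hpd (K_even hrad)
  have inner : ∀ u, 0 ≤ u → u ≤ 1 →
      ∫ u', K ((l * u) • ev i - (l * u') • ev i) ∂UU ≤ 2 * Jk k l / l := by
    intro u h0 h1
    rw [UU_int]
    have e1 : ∫ u' in (0 : ℝ)..1, K ((l * u) • ev i - (l * u') • ev i)
        ≤ ∫ u' in (0 : ℝ)..1, gk k (l * u - l * u') := by
      refine intervalIntegral.integral_mono_on zero_le_one
        (Continuous.intervalIntegrable (by fun_prop) _ _)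
        (Continuous.intervalIntegrable (by fun_prop) _ _) ?_
      intro u' _
      rw [← sub_smul, K_ev hrad]
      exact le_abs_self _
    refine e1.trans ?_
    rw [intervalIntegral.integral_comp_sub_mul _ hl.ne', ← Jk_sub hg]
    have e2 : Jk k (l * u - l * 1) = - Jk k (l - l * u) := by
      rw [← Jk_neg hg]; ring_nf
    rw [e2, smul_eq_mul, mul_zero, sub_zero, sub_neg_eq_add, inv_mul_eq_div]
    have e3 : Jk k (l * u) ≤ Jk k l := Jk_mono hg (by nlinarith)
    have e4 : Jk k (l - l * u) ≤ Jk k l := Jk_mono hg (by nlinarith)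
    gcongr
    linarith
  have : ∫ u, ∫ u', K ((l * u) • ev i - (l * u') • ev i) ∂UU ∂UU ≤ ∫ u, 2 * Jk k l / l ∂UU := by
    refine integral_mono_ae (aux_int _ (pot_meas UU hcont (fun u => (l * u) • ev i)
      (fun u => (l * u) • ev i) (by fun_prop) (by fun_prop))
      (fun _ => aux_bd _ (fun _ => hb _))) (integrable_const _) ?_
    filter_upwards [ae_restrict_mem measurableSet_Ioc] with u hu
    exact inner u hu.1.le hu.2
  simpa using this

/-- Lower bound on the potential of a segment. -/
lemma pot_lower (hcont : Continuous K) (hrad : ∀ x, K x = k ‖x‖) (hpd : IsPosDefKernel K)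
    (i : Fin d) {r₀ : ℝ} (h0 : 0 < r₀) (hp : ∀ x, r₀ ≤ x → 0 < k x)
    (hm : ∀ x y : ℝ, r₀ ≤ x → x ≤ y → k y ≤ 2 * k x) {R s p : ℝ} (hR : 0 < R) (hs : 0 ≤ s)
    (hp0 : 0 ≤ p) (hp1 : p ≤ R) (x : EuclideanSpace ℝ (Fin d)) (hx : ‖x - p • ev i‖ ≤ s) :
    ((Jk k (R / 2 + s) - Jk k s) / 2 - 4 * K 0 * r₀) / R ≤ ∫ u, K (x - (R * u) • ev i) ∂UU := by
  have hg := gk_cont hcont hrad i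
  have hKm : Measurable K := hcont.measurable
  have hb := K_bound hpd (K_even hrad)
  have hK0 := K_zero_nonneg hpd
  have gb : ∀ z, gk k z ≤ K 0 := fun z => by
    have := hb (z • ev i); rw [K_ev hrad] at this; exact this
  have pt : ∀ y, gk k (|p - y| + s) / 2 - 2 * K 0 * ind r₀ (x i - y) ≤ K (x - y • ev i) := by
    intro y
    have hcoord : |x i - y| ≤ ‖x - y • ev i‖ := by
      have := PiLp.norm_apply_le (x - y • ev i) i
      simpa [ev] using this
    have htri : ‖x - y • ev i‖ ≤ |p - y| + s := by
      have : x - y • ev i = (p - y) • ev i + (x - p • ev i) := by rw [sub_smul]; abel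
      rw [this]
      refine (norm_add_le _ _).trans ?_
      rw [norm_smul, ev_norm, mul_one, Real.norm_eq_abs]
      linarith
    by_cases hc : r₀ ≤ ‖x - y • ev i‖
    · have h1 := hm _ _ hc htri
      rw [gk_eq h0 hp (hc.trans htri), hrad (x - y • ev i)]
      have := ind_nonneg r₀ (x i - y)
      have : 0 ≤ 2 * K 0 * ind r₀ (x i - y) := by positivity
      linarith
    · push Not at hc
      have : ind r₀ (x i - y) = 1 := by unfold ind; rw [if_pos (hcoord.trans_lt hc)]
      rw [this]
      have h1 := gb (|p - y| + s)
      have h2 := (abs_le.1 (hb (x - y • ev i))).1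
      linarith
  have i1 : Integrable (fun u => gk k (|p - R * u| + s) / 2) UU :=
    aux_int _ (C := K 0) (by fun_prop) (fun u => by
      have := gb (|p - R * u| + s); have := gk_nonneg (k := k) (|p - R * u| + s)
      rw [abs_le]; constructor <;> linarith)
  have i2 : Integrable (fun u => 2 * K 0 * ind r₀ (x i - R * u)) UU :=
    (aux_int _ ((ind_meas r₀).comp (by fun_prop)) (fun u => ind_abs _ _)).const_mul _
  have step : ∫ u, (gk k (|p - R * u| + s) / 2 - 2 * K 0 * ind r₀ (x i - R * u)) ∂UU
      ≤ ∫ u, K (x - (R * u) • ev i) ∂UU :=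
    integral_mono (i1.sub i2) (aux_int _ (by fun_prop) (fun _ => hb _)) (fun u => pt _)
  refine le_trans ?_ step
  rw [integral_sub i1 i2, integral_const_mul, integral_div]
  have h3 := ind_int hR h0.le (x i)
  have h4 : (Jk k (R / 2 + s) - Jk k s) / R ≤ ∫ u, gk k (|p - R * u| + s) ∂UU := by
    rw [UU_int, intervalIntegral.integral_comp_mul_left (fun y => gk k (|p - y| + s)) hR.ne',
      smul_eq_mul, inv_mul_eq_div, mul_zero, mul_one]
    gcongr
    have c1 : Continuous (fun y => gk k (|p - y| + s)) := by fun_prop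
    rw [← intervalIntegral.integral_add_adjacent_intervals (c1.intervalIntegrable 0 p)
      (c1.intervalIntegrable p R)]
    have a1 : ∫ y in (0 : ℝ)..p, gk k (|p - y| + s) = Jk k (p + s) - Jk k s := by
      rw [Jk_sub hg]
      have : ∫ y in (0 : ℝ)..p, gk k (|p - y| + s) = ∫ y in (0 : ℝ)..p, gk k ((p + s) - y) := by
        refine intervalIntegral.integral_congr ?_
        intro y hy
        rw [Set.uIcc_of_le hp0] at hy
        simp only
        rw [abs_of_nonneg (by linarith [hy.2])]
        ring_nf
      rw [this, intervalIntegral.integral_comp_sub_left (fun y => gk k y)]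
      ring_nf
    have a2 : ∫ y in p..R, gk k (|p - y| + s) = Jk k (R - p + s) - Jk k s := by
      rw [Jk_sub hg]
      have : ∫ y in p..R, gk k (|p - y| + s) = ∫ y in p..R, gk k (y - (p - s)) := by
        refine intervalIntegral.integral_congr ?_
        intro y hy
        rw [Set.uIcc_of_le hp1] at hy
        simp only
        rw [abs_sub_comm, abs_of_nonneg (by linarith [hy.1])]
        ring_nf
      rw [this, intervalIntegral.integral_comp_sub_right (fun y => gk k y)]
      ring_nf
    rw [a1, a2]
    have b1 : Jk k s ≤ Jk k (p + s) := Jk_mono hg (by linarith)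
    have b2 : Jk k s ≤ Jk k (R - p + s) := Jk_mono hg (by linarith)
    rcases le_total p (R / 2) with hc | hc
    · have : Jk k (R / 2 + s) ≤ Jk k (R - p + s) := Jk_mono hg (by linarith)
      linarith
    · have : Jk k (R / 2 + s) ≤ Jk k (p + s) := Jk_mono hg (by linarith)
      linarith
  have h5 : ((Jk k (R / 2 + s) - Jk k s) / 2 - 4 * K 0 * r₀) / R
      = (Jk k (R / 2 + s) - Jk k s) / R / 2 - 2 * K 0 * (r₀ * (2 / R)) := by ring
  rw [h5]
  have h6 : 2 * K 0 * ∫ u, ind r₀ (x i - R * u) ∂UU ≤ 2 * K 0 * (r₀ * (2 / R)) :=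
    mul_le_mul_of_nonneg_left h3 (by positivity)
  linarith

lemma energy_nonneg (hcont : Continuous K) (hrad : ∀ x, K x = k ‖x‖) (hpd : IsPosDefKernel K)
    (μ : Measure (EuclideanSpace ℝ (Fin d))) [IsProbabilityMeasure μ] : 0 ≤ energyE K μ := by
  have := cs μ μ hcont hpd (K_even hrad) id id measurable_id measurable_id 0
  simpa [energyE] using this

lemma energy_lower (hcont : Continuous K) (hrad : ∀ x, K x = k ‖x‖) (hpd : IsPosDefKernel K)
    (i : Fin d) {r₀ : ℝ} (h0 : 0 < r₀) (hp : ∀ x, r₀ ≤ x → 0 < k x)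
    (hm : ∀ x y : ℝ, r₀ ≤ x → x ≤ y → k y ≤ 2 * k x) {R s : ℝ} (hR : 0 < R) (hs : 0 ≤ s)
    (hJ : 0 < Jk k R) {Q : ℝ} (hQ0 : 0 ≤ Q)
    (hQ : Q ≤ (Jk k (R / 2 + s) - Jk k s) / 2 - 4 * K 0 * r₀)
    (μ : Measure (EuclideanSpace ℝ (Fin d))) [IsProbabilityMeasure μ]
    (hμ : ∀ᵐ x ∂μ, ∃ p : ℝ, 0 ≤ p ∧ p ≤ R ∧ ‖x - p • ev i‖ ≤ s) :
    Q ^ 2 / (2 * R * Jk k R) ≤ energyE K μ := by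
  have hb := K_bound hpd (K_even hrad)
  have h1 : Q / R ≤ ∫ x, ∫ u, K (x - (R * u) • ev i) ∂UU ∂μ := by
    have : ∫ x, Q / R ∂μ ≤ ∫ x, ∫ u, K (x - (R * u) • ev i) ∂UU ∂μ := by
      refine integral_mono_ae (integrable_const _) (aux_int _ (pot_meas UU hcont id
        (fun u => (R * u) • ev i) measurable_id (by fun_prop))
        (fun _ => aux_bd _ (fun _ => hb _))) ?_
      filter_upwards [hμ] with x hx
      obtain ⟨p, a, b, c⟩ := hx
      refine le_trans ?_ (pot_lower hcont hrad hpd i h0 hp hm hR hs a b x c)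
      gcongr
    simpa using this
  have h2 := seg_energy hcont hrad hpd i hR
  have h3 := cs μ UU hcont hpd (K_even hrad) id (fun u => (R * u) • ev i) measurable_id
    (by fun_prop) (Q / (2 * Jk k R))
  have h4 : (∫ a, ∫ a', K (id a - id a') ∂μ ∂μ) = energyE K μ := rfl
  rw [h4] at h3
  simp only [id] at h3
  set I := ∫ x, ∫ u, K (x - (R * u) • ev i) ∂UU ∂μ
  set S := ∫ u, ∫ u', K ((R * u) • ev i - (R * u') • ev i) ∂UU ∂UU
  have h5 : 2 * (Q / (2 * Jk k R)) * (Q / R) ≤ 2 * (Q / (2 * Jk k R)) * I :=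
    mul_le_mul_of_nonneg_left h1 (by positivity)
  have h6 : (Q / (2 * Jk k R)) ^ 2 * S ≤ (Q / (2 * Jk k R)) ^ 2 * (2 * Jk k R / R) :=
    mul_le_mul_of_nonneg_left h2 (by positivity)
  have h7 : Q ^ 2 / (2 * R * Jk k R) = 2 * (Q / (2 * Jk k R)) * (Q / R)
      - (Q / (2 * Jk k R)) ^ 2 * (2 * Jk k R / R) := by
    field_simp; ring
  rw [h7]
  linarith

end line

section ub
variable {d : ℕ} {K : EuclideanSpace ℝ (Fin d) → ℝ} {k : ℝ → ℝ}

/-- Extension of a finite family of centres to all natural numbers. -/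
noncomputable def cext {n : ℕ} (c : Fin n → EuclideanSpace ℝ (Fin d)) (j : ℕ) :
    EuclideanSpace ℝ (Fin d) := if h : j < n then c ⟨j, h⟩ else 0

lemma int_three {A : Type*} [MeasurableSpace A] (P : Measure A) {a b c : A → ℝ}
    (ha : Integrable a P) (hb : Integrable b P) (hc : Integrable c P) (Λ κ E : ℝ) :
    ∫ x, (Λ * (a x + κ * b x) + E * c x) ∂P
      = Λ * ((∫ x, a x ∂P) + κ * ∫ x, b x ∂P) + E * ∫ x, c x ∂P := by
  have h1 : Integrable (fun x => a x + κ * b x) P := ha.add (hb.const_mul κ)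
  have h2 : Integrable (fun x => Λ * (a x + κ * b x)) P := h1.const_mul Λ
  rw [integral_add h2 (hc.const_mul E), integral_const_mul, integral_const_mul,
    integral_add ha (hb.const_mul κ), integral_const_mul]

lemma ub1 {A : Type*} [MeasurableSpace A] (P : Measure A) [IsProbabilityMeasure P]
    (hcont : Continuous K) (hrad : ∀ x, K x = k ‖x‖) (hpd : IsPosDefKernel K)
    (i : Fin d) {r₀ : ℝ} (h0 : 0 < r₀) (hp : ∀ x, r₀ ≤ x → 0 < k x)
    (T : A → ℝ) (hT : Measurable T) {N β r s Λ M q : ℝ} (hβ : 0 < β) (hr : 0 < r)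
    (hs : 0 < s) (hsr : s ≤ r) (hΛ : 0 ≤ Λ) (hM : 0 ≤ M)
    (hTN : ∀ᵐ a ∂P, 0 ≤ T a ∧ T a ≤ N) (n : ℕ) (hn : N / (β * r) < n)
    (c : Fin n → EuclideanSpace ℝ (Fin d))
    (hsep : ∀ i j : Fin n, |(i : ℝ) - (j : ℝ)| * r ≤ ‖c i - c j‖)
    (hcmp : ∀ τ z : ℝ, M * r ≤ τ → τ / β - 2 * r ≤ z → k z ≤ Λ * k τ)
    (hnear : ∀ w : ℝ, 0 ≤ w → ∫ a, ∫ b, ind w (T a - T b) ∂P ∂P ≤ w * q) :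
    ∃ ν : Measure (EuclideanSpace ℝ (Fin d)), IsProbabilityMeasure ν ∧
      ν (⋃ j : Fin n, Metric.closedBall (c j) s)ᶜ = 0 ∧
      energyE K ν ≤ Λ * ((∫ a, ∫ b, K ((T a - T b) • ev i) ∂P ∂P) + K 0 * (r₀ * q))
        + 2 * Jk k s / s * (M * r * q) := by
  have hg := gk_cont hcont hrad i
  have hKm : Measurable K := hcont.measurable
  have hb := K_bound hpd (K_even hrad)
  have hK0 := K_zero_nonneg hpd
  let idx : A → ℕ := fun a => ⌊T a / (β * r)⌋₊
  have hidx : Measurable idx := Nat.measurable_floor.comp (hT.div_const _)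
  let cc : A → EuclideanSpace ℝ (Fin d) := fun a => cext c (idx a)
  have hcc : Measurable cc := (measurable_from_top (f := cext c)).comp hidx
  let Z : A × ℝ → EuclideanSpace ℝ (Fin d) := fun p => cc p.1 + (s * p.2) • ev i
  have hZ : Measurable Z := by
    refine (hcc.comp measurable_fst).add ?_
    fun_prop
  have hβr : 0 < β * r := mul_pos hβ hr
  have hlt : ∀ a, 0 ≤ T a ∧ T a ≤ N → idx a < n := by
    intro a ha
    have h1 : T a / (β * r) < n := lt_of_le_of_lt (by gcongr; exact ha.2) hn
    exact (Nat.floor_lt (div_nonneg ha.1 hβr.le)).2 h1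
  have hccv : ∀ a (h : idx a < n), cc a = c ⟨idx a, h⟩ := by
    intro a h
    simp only [cc, cext, dif_pos h]
  refine ⟨(P.prod UU).map Z, Measure.isProbabilityMeasure_map hZ.aemeasurable, ?_, ?_⟩
  · have hmeas : MeasurableSet (⋃ j : Fin n, Metric.closedBall (c j) s) :=
      MeasurableSet.iUnion (fun j => Metric.isClosed_closedBall.measurableSet)
    rw [Measure.map_apply hZ hmeas.compl]
    have hae : ∀ᵐ p ∂(P.prod UU), Z p ∈ ⋃ j : Fin n, Metric.closedBall (c j) s := by
      have a1 := Measure.quasiMeasurePreserving_fst (μ := P) (ν := UU) |>.ae hTN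
      have a2 := Measure.quasiMeasurePreserving_snd (μ := P) (ν := UU) |>.ae
        (ae_restrict_mem measurableSet_Ioc)
      filter_upwards [a1, a2] with p h1 h2
      rw [Set.mem_iUnion]
      refine ⟨⟨idx p.1, hlt _ h1⟩, ?_⟩
      simp only [Z, hccv _ (hlt _ h1), Metric.mem_closedBall, dist_eq_norm, add_sub_cancel_left]
      rw [norm_smul, ev_norm, mul_one, Real.norm_of_nonneg (mul_nonneg hs.le h2.1.le)]
      nlinarith [h2.2]
    exact hae
  · have e1 : energyE K ((P.prod UU).map Z)
        = ∫ a, ∫ a', ∫ u, ∫ u', K ((cc a + (s * u) • ev i) - (cc a' + (s * u') • ev i))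
          ∂UU ∂UU ∂P ∂P := by
      unfold energyE
      have hm1 : StronglyMeasurable (fun x => ∫ y, K (x - y) ∂((P.prod UU).map Z)) := by
        have := Measure.isProbabilityMeasure_map (μ := P.prod UU) hZ.aemeasurable
        exact (pot_meas ((P.prod UU).map Z) hcont id id measurable_id
          measurable_id).stronglyMeasurable
      rw [integral_map hZ.aemeasurable hm1.aestronglyMeasurable]
      have : ∀ p, ∫ y, K (Z p - y) ∂((P.prod UU).map Z) = ∫ q, K (Z p - Z q) ∂(P.prod UU) := by
        intro p
        rw [integral_map hZ.aemeasurable]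
        exact (by fun_prop : Measurable (fun y => K (Z p - y))).aestronglyMeasurable
      simp_rw [this]
      exact quad_swap P UU (fun a u a' u' => K ((cc a + (s * u) • ev i)
        - (cc a' + (s * u') • ev i))) (by fun_prop) (fun _ _ _ _ => hb _)
    rw [e1]
    have hseg := seg_energy hcont hrad hpd i hs
    have hseg0 : 0 ≤ 2 * Jk k s / s := by
      have := Jk_nonneg hg hs.le
      positivity
    set Es := 2 * Jk k s / s with hEs
    have hmain := dbl_mono P hTN
      (f := fun a a' => ∫ u, ∫ u', K ((cc a + (s * u) • ev i) - (cc a' + (s * u') • ev i)) ∂UU ∂UU)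
      (g := fun a a' => Λ * (K ((T a - T a') • ev i) + K 0 * ind r₀ (T a - T a'))
        + Es * ind (M * r) (T a - T a'))
      (C := K 0) (D := Λ * (K 0 + K 0 * 1) + Es * 1) ?_ ?_ ?_ ?_ ?_
    · refine hmain.trans (le_of_eq_of_le ?_ (add_le_add (mul_le_mul_of_nonneg_left
        (add_le_add_right (mul_le_mul_of_nonneg_left (hnear r₀ h0.le) hK0) _) hΛ)
        (mul_le_mul_of_nonneg_left (hnear (M * r) (by positivity)) hseg0)))
      have mi := ind_meas
      have J1 : ∀ a, Integrable (fun b => K ((T a - T b) • ev i)) P := fun a =>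
        aux_int _ (by fun_prop) (fun _ => hb _)
      have J2 : ∀ w a, Integrable (fun b => ind w (T a - T b)) P := fun w a =>
        aux_int _ ((mi w).comp (by fun_prop)) (fun _ => ind_abs _ _)
      have M1 : Integrable (fun a => ∫ b, K ((T a - T b) • ev i) ∂P) P := by
        refine aux_int _ (C := K 0) ?_ (fun _ => aux_bd _ (fun _ => hb _))
        have : Measurable (fun p : A × A => K ((T p.1 - T p.2) • ev i)) := by fun_prop
        exact (this.stronglyMeasurable.integral_prod_right').measurable
      have M2 : ∀ w, Integrable (fun a => ∫ b, ind w (T a - T b) ∂P) P := by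
        intro w
        refine aux_int _ (C := 1) ?_ (fun _ => aux_bd _ (fun _ => ind_abs _ _))
        have : Measurable (fun p : A × A => ind w (T p.1 - T p.2)) :=
          (mi w).comp (by fun_prop)
        exact (this.stronglyMeasurable.integral_prod_right').measurable
      have s1 : ∀ a, ∫ b, (Λ * (K ((T a - T b) • ev i) + K 0 * ind r₀ (T a - T b))
          + Es * ind (M * r) (T a - T b)) ∂P
          = Λ * ((∫ b, K ((T a - T b) • ev i) ∂P) + K 0 * ∫ b, ind r₀ (T a - T b) ∂P)
            + Es * ∫ b, ind (M * r) (T a - T b) ∂P := by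
        intro a
        exact int_three P (J1 a) (J2 r₀ a) (J2 (M * r) a) Λ (K 0) Es
      simp_rw [s1]
      exact int_three P M1 (M2 r₀) (M2 (M * r)) Λ (K 0) Es
    · have m1 : Measurable (fun p : ((A × A) × ℝ) × ℝ =>
          K ((cc p.1.1.1 + (s * p.1.2) • ev i) - (cc p.1.1.2 + (s * p.2) • ev i))) := by fun_prop
      have m2 := m1.stronglyMeasurable.integral_prod_right' (ν := UU)
      exact (m2.integral_prod_right' (ν := UU)).measurable
    · have mi := ind_meas
      have u1 : Measurable (fun q : A × A => ind r₀ (T q.1 - T q.2)) := (mi _).comp (by fun_prop)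
      have u2 : Measurable (fun q : A × A => ind (M * r) (T q.1 - T q.2)) :=
        (mi _).comp (by fun_prop)
      fun_prop
    · intro a b
      exact aux_bd _ (fun u => aux_bd _ (fun u' => hb _))
    · intro a b
      have b1 := hb ((T a - T b) • ev i)
      have b2 := ind_abs r₀ (T a - T b)
      have b3 := ind_abs (M * r) (T a - T b)
      refine (abs_add_le _ _).trans ?_
      rw [abs_mul, abs_mul, abs_of_nonneg hΛ, abs_of_nonneg hseg0]
      refine add_le_add (mul_le_mul_of_nonneg_left ?_ hΛ) (mul_le_mul_of_nonneg_left b3 hseg0)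
      refine (abs_add_le _ _).trans (add_le_add b1 ?_)
      rw [abs_mul, abs_of_nonneg hK0]
      exact mul_le_mul_of_nonneg_left b2 hK0
    · intro a b ha hb'
      have hind0 := ind_nonneg r₀ (T a - T b)
      by_cases hc : |T a - T b| < M * r
      · -- near case
        have n1 : ind (M * r) (T a - T b) = 1 := by unfold ind; rw [if_pos hc]
        have n2 : 0 ≤ K ((T a - T b) • ev i) + K 0 * ind r₀ (T a - T b) := by
          by_cases h : |T a - T b| < r₀
          · have : ind r₀ (T a - T b) = 1 := by unfold ind; rw [if_pos h]
            rw [this]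
            have := (abs_le.1 (hb ((T a - T b) • ev i))).1
            linarith
          · push Not at h
            rw [K_ev hrad]
            have := hp _ h
            positivity
        have n3 := cs UU UU hcont hpd (K_even hrad) (fun u => cc a + (s * u) • ev i)
          (fun u => cc b + (s * u) • ev i) (by fun_prop) (by fun_prop) 1
        simp only [add_sub_add_left_eq_sub] at n3
        rw [n1]
        have : 0 ≤ Λ * (K ((T a - T b) • ev i) + K 0 * ind r₀ (T a - T b)) :=
          mul_nonneg hΛ n2
        linarith
      · -- far case
        push Not at hc
        have n1 : ind (M * r) (T a - T b) = 0 := by unfold ind; rw [if_neg (not_lt.2 hc)]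
        have f1 : ∀ u u', 0 ≤ u → u ≤ 1 → 0 ≤ u' → u' ≤ 1 →
            K ((cc a + (s * u) • ev i) - (cc b + (s * u') • ev i)) ≤ Λ * k |T a - T b| := by
          intro u u' hu0 hu1 hv0 hv1
          rw [hrad]
          refine hcmp _ _ hc ?_
          rw [hccv a (hlt a ha), hccv b (hlt b hb')]
          have hs1 := hsep ⟨idx a, hlt a ha⟩ ⟨idx b, hlt b hb'⟩
          simp only at hs1
          have hl : |T a - T b| / (β * r) - 1 ≤ |(idx a : ℝ) - (idx b : ℝ)| := by
            have x1 := Nat.floor_le (div_nonneg ha.1 hβr.le)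
            have x2 := Nat.lt_floor_add_one (T a / (β * r))
            have y1 := Nat.floor_le (div_nonneg hb'.1 hβr.le)
            have y2 := Nat.lt_floor_add_one (T b / (β * r))
            have : |T a - T b| / (β * r) = |T a / (β * r) - T b / (β * r)| := by
              rw [← sub_div, abs_div, abs_of_pos hβr]
            rw [this]
            simp only [idx]
            rcases abs_cases (T a / (β * r) - T b / (β * r)) with ⟨z, _⟩ | ⟨z, _⟩
            · have := le_abs_self ((⌊T a / (β * r)⌋₊ : ℝ) - (⌊T b / (β * r)⌋₊ : ℝ))
              linarith
            · have := neg_abs_le ((⌊T a / (β * r)⌋₊ : ℝ) - (⌊T b / (β * r)⌋₊ : ℝ))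
              linarith
          have hl2 : |T a - T b| / β - r ≤ |(idx a : ℝ) - (idx b : ℝ)| * r := by
            have := mul_le_mul_of_nonneg_right hl hr.le
            have e : (|T a - T b| / (β * r) - 1) * r = |T a - T b| / β - r := by
              field_simp
            linarith
          have htri : ‖c ⟨idx a, hlt a ha⟩ - c ⟨idx b, hlt b hb'⟩‖ ≤
              ‖(c ⟨idx a, hlt a ha⟩ + (s * u) • ev i) - (c ⟨idx b, hlt b hb'⟩ + (s * u') • ev i)‖
              + r := by
            have e : c ⟨idx a, hlt a ha⟩ - c ⟨idx b, hlt b hb'⟩ =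
              ((c ⟨idx a, hlt a ha⟩ + (s * u) • ev i) - (c ⟨idx b, hlt b hb'⟩ + (s * u') • ev i))
              + (s * u' - s * u) • ev i := by rw [sub_smul]; abel
            conv_lhs => rw [e]
            refine (norm_add_le _ _).trans ?_
            gcongr
            rw [norm_smul, ev_norm, mul_one, Real.norm_eq_abs, ← mul_sub, abs_mul, abs_of_pos hs]
            have : |u' - u| ≤ 1 := by rw [abs_le]; constructor <;> linarith
            nlinarith
          linarith
        have f2 : ∫ u, ∫ u', K ((cc a + (s * u) • ev i) - (cc b + (s * u') • ev i)) ∂UU ∂UU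
            ≤ ∫ u, ∫ u', Λ * k |T a - T b| ∂UU ∂UU := by
          refine dbl_mono UU (p := fun u => u ∈ Set.Ioc (0 : ℝ) 1)
            (ae_restrict_mem measurableSet_Ioc) (by fun_prop) (by fun_prop)
            (fun _ _ => hb _) (fun _ _ => le_rfl) ?_
          intro u u' hu hu'
          exact f1 u u' hu.1.le hu.2 hu'.1.le hu'.2
        simp only [integral_const, probReal_univ, one_smul] at f2
        refine f2.trans ?_
        rw [n1, K_ev hrad, mul_zero, add_zero]
        refine mul_le_mul_of_nonneg_left ?_ hΛ
        have : 0 ≤ K 0 * ind r₀ (T a - T b) := by positivity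
        linarith

lemma ub2 (μ : Measure (EuclideanSpace ℝ (Fin d))) [IsProbabilityMeasure μ]
    (hcont : Continuous K) (hrad : ∀ x, K x = k ‖x‖) (hpd : IsPosDefKernel K)
    (i : Fin d) {r₀ : ℝ} (h0 : 0 < r₀) (hp : ∀ x, r₀ ≤ x → 0 < k x)
    {R δ β r s Λ M : ℝ} (hR : 0 < R) (hδ : 0 < δ) (hβ : 0 < β) (hr : 0 < r)
    (hs : 0 < s) (hsr : s ≤ r) (hΛ : 0 ≤ Λ) (hM : 0 ≤ M)
    (hμ : ∀ᵐ x ∂μ, 0 ≤ x i ∧ x i ≤ R ∧ x = (x i) • ev i)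
    (n : ℕ) (hn : ((1 + δ) * R) / (β * r) < n)
    (c : Fin n → EuclideanSpace ℝ (Fin d))
    (hsep : ∀ i j : Fin n, |(i : ℝ) - (j : ℝ)| * r ≤ ‖c i - c j‖)
    (hcmp : ∀ τ z : ℝ, M * r ≤ τ → τ / β - 2 * r ≤ z → k z ≤ Λ * k τ) :
    ∃ ν : Measure (EuclideanSpace ℝ (Fin d)), IsProbabilityMeasure ν ∧
      ν (⋃ j : Fin n, Metric.closedBall (c j) s)ᶜ = 0 ∧
      energyE K ν ≤ Λ * (energyE K μ + K 0 * (r₀ * (2 / (δ * R))))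
        + 2 * Jk k s / s * (M * r * (2 / (δ * R))) := by
  have hKm : Measurable K := hcont.measurable
  have hb := K_bound hpd (K_even hrad)
  have hδR : 0 < δ * R := by positivity
  have hcoord : Measurable (fun x : EuclideanSpace ℝ (Fin d) => x i) := by fun_prop
  let T : ℝ × EuclideanSpace ℝ (Fin d) → ℝ := fun p => p.2 i + (δ * R) * p.1
  have hT : Measurable T := by
    refine (hcoord.comp measurable_snd).add ?_
    fun_prop
  have hTN : ∀ᵐ p ∂(UU.prod μ), 0 ≤ T p ∧ T p ≤ (1 + δ) * R := by
    have a1 := Measure.quasiMeasurePreserving_snd (μ := UU) (ν := μ) |>.ae hμ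
    have a2 := Measure.quasiMeasurePreserving_fst (μ := UU) (ν := μ) |>.ae
      (ae_restrict_mem measurableSet_Ioc)
    filter_upwards [a1, a2] with p h1 h2
    have h3 := mul_nonneg hδR.le h2.1.le
    have h4 : δ * R * p.1 ≤ δ * R * 1 := mul_le_mul_of_nonneg_left h2.2 hδR.le
    simp only [T]
    constructor <;> linarith [h1.1, h1.2.1]
  have hnear : ∀ w : ℝ, 0 ≤ w → ∫ a, ∫ b, ind w (T a - T b) ∂(UU.prod μ) ∂(UU.prod μ)
      ≤ w * (2 / (δ * R)) := by
    intro w hw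
    have inner : ∀ a, ∫ b, ind w (T a - T b) ∂(UU.prod μ) ≤ w * (2 / (δ * R)) := by
      intro a
      have hmm : Measurable (fun b => ind w (T a - T b)) := (ind_meas w).comp (by fun_prop)
      rw [integral_prod_symm (fun b => ind w (T a - T b)) (aux_int _ hmm (fun _ => ind_abs _ _))]
      have : ∫ y, ∫ x, ind w (T a - T (x, y)) ∂UU ∂μ ≤ ∫ y, w * (2 / (δ * R)) ∂μ := by
        refine integral_mono (aux_int _ (C := 1) ?_ (fun _ => aux_bd _ (fun _ => ind_abs _ _)))
          (integrable_const _) (fun y => ?_)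
        · have : Measurable (fun p : EuclideanSpace ℝ (Fin d) × ℝ =>
              ind w (T a - T (p.2, p.1))) := (ind_meas w).comp (by fun_prop)
          exact (this.stronglyMeasurable.integral_prod_right').measurable
        · have := ind_int hδR hw (T a - y i)
          have e : (fun x => ind w (T a - T (x, y))) =
              fun u => ind w (T a - y i - δ * R * u) := by
            funext x
            congr 1
            simp only [T]
            ring
          have e2 : ∫ x, ind w (T a - T (x, y)) ∂UU = ∫ u, ind w (T a - y i - δ * R * u) ∂UU := by
            rw [e]
          exact e2.trans_le this
      simpa using this
    have : ∫ a, ∫ b, ind w (T a - T b) ∂(UU.prod μ) ∂(UU.prod μ)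
        ≤ ∫ a, w * (2 / (δ * R)) ∂(UU.prod μ) := by
      refine integral_mono (aux_int _ (C := 1) ?_ (fun _ => aux_bd _ (fun _ => ind_abs _ _)))
          (integrable_const _) inner
      have : Measurable (fun p : (ℝ × EuclideanSpace ℝ (Fin d)) × (ℝ × EuclideanSpace ℝ (Fin d)) =>
          ind w (T p.1 - T p.2)) := (ind_meas w).comp (by fun_prop)
      exact (this.stronglyMeasurable.integral_prod_right').measurable
    simpa using this
  obtain ⟨ν, v1, v2, v3⟩ := ub1 (UU.prod μ) hcont hrad hpd i h0 hp T hT hβ hr hs hsr hΛ hM hTN n hn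
    c hsep hcmp hnear
  refine ⟨ν, v1, v2, v3.trans ?_⟩
  have hE : energyE K μ = ∫ x, ∫ y, K ((x i) • ev i - (y i) • ev i) ∂μ ∂μ := by
    unfold energyE
    refine integral_congr_ae ?_
    filter_upwards [hμ] with x hx
    refine integral_congr_ae ?_
    filter_upwards [hμ] with y hy
    rw [← hx.2.2, ← hy.2.2]
  have hsm : ∫ a, ∫ b, K ((T a - T b) • ev i) ∂(UU.prod μ) ∂(UU.prod μ) ≤ energyE K μ := by
    have q := quad_swap UU μ (fun v x v' x' => K ((x i + δ * R * v - (x' i + δ * R * v')) • ev i))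
      (by fun_prop) (fun _ _ _ _ => hb _)
    have q' : ∫ a, ∫ b, K ((T a - T b) • ev i) ∂(UU.prod μ) ∂(UU.prod μ)
      = ∫ v, ∫ v', ∫ x, ∫ x', K ((x i + δ * R * v - (x' i + δ * R * v')) • ev i)
        ∂μ ∂μ ∂UU ∂UU := q
    rw [q']
    have key : ∀ v v', ∫ x, ∫ x', K ((x i + δ * R * v - (x' i + δ * R * v')) • ev i) ∂μ ∂μ
        ≤ energyE K μ := by
      intro v v'
      have h := cs μ μ hcont hpd (K_even hrad) (fun x => (x i + δ * R * v) • ev i)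
        (fun x => (x i + δ * R * v') • ev i) (by fun_prop) (by fun_prop) 1
      simp only [← sub_smul, add_sub_add_right_eq_sub] at h hE
      rw [← hE] at h
      linarith
    have m1 : Measurable (fun p : ((ℝ × ℝ) × EuclideanSpace ℝ (Fin d)) ×
        EuclideanSpace ℝ (Fin d) =>
        K ((p.1.2 i + δ * R * p.1.1.1 - (p.2 i + δ * R * p.1.1.2)) • ev i)) := by fun_prop
    have m2 := m1.stronglyMeasurable.integral_prod_right' (ν := μ)
    have := dbl_mono UU (p := fun _ => True) (Eventually.of_forall fun _ => trivial)
      (f := fun v v' => ∫ x, ∫ x', K ((x i + δ * R * v - (x' i + δ * R * v')) • ev i) ∂μ ∂μ)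
      (g := fun _ _ => energyE K μ)
      (m2.integral_prod_right' (ν := μ)).measurable (by fun_prop)
      (fun _ _ => aux_bd _ (fun _ => aux_bd _ (fun _ => hb _))) (fun _ _ => le_rfl)
      (fun v v' _ _ => key v v')
    simpa using this
  gcongr
end ub

section fin
variable {d : ℕ} {K : EuclideanSpace ℝ (Fin d) → ℝ} {k : ℝ → ℝ}

/-- Minimal energy of a probability measure on `D`. -/
noncomputable def minE (K : EuclideanSpace ℝ (Fin d) → ℝ)
    (D : Set (EuclideanSpace ℝ (Fin d))) : ℝ :=
  sInf {e : ℝ | ∃ μ : Measure (EuclideanSpace ℝ (Fin d)),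
      IsProbabilityMeasure μ ∧ μ Dᶜ = 0 ∧ e = energyE K μ}

lemma cap_eq (D : Set (EuclideanSpace ℝ (Fin d))) : capacityE K D = (minE K D)⁻¹ := rfl

lemma minE_le (hcont : Continuous K) (hrad : ∀ x, K x = k ‖x‖) (hpd : IsPosDefKernel K)
    {D : Set (EuclideanSpace ℝ (Fin d))}
    (μ : Measure (EuclideanSpace ℝ (Fin d))) (hp : IsProbabilityMeasure μ) (hμ : μ Dᶜ = 0) :
    minE K D ≤ energyE K μ := by
  refine csInf_le ⟨0, ?_⟩ ⟨μ, hp, hμ, rfl⟩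
  rintro e ⟨ν, hν, _, rfl⟩
  exact energy_nonneg hcont hrad hpd ν

lemma le_minE {D : Set (EuclideanSpace ℝ (Fin d))} (hne : D.Nonempty) {b : ℝ}
    (h : ∀ μ : Measure (EuclideanSpace ℝ (Fin d)), IsProbabilityMeasure μ → μ Dᶜ = 0 →
      b ≤ energyE K μ) : b ≤ minE K D := by
  obtain ⟨x, hx⟩ := hne
  refine le_csInf ⟨_, Measure.dirac x, inferInstance, ?_, rfl⟩ ?_
  · rw [Measure.dirac_apply]
    simp [hx]
  · rintro e ⟨ν, hν, h2, rfl⟩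
    exact h ν hν h2

lemma tube_lower (hcont : Continuous K) (hrad : ∀ x, K x = k ‖x‖) (hpd : IsPosDefKernel K)
    (i : Fin d) {r₀ : ℝ} (h0 : 0 < r₀) (hp : ∀ x, r₀ ≤ x → 0 < k x)
    (hm : ∀ x y : ℝ, r₀ ≤ x → x ≤ y → k y ≤ 2 * k x) {R t : ℝ} (hR : 4 * r₀ ≤ R) (ht : 0 ≤ t)
    (hJ : 0 < Jk k R) (hJt : Jk k t ≤ Jk k R / 36) (hJc : 4 * K 0 * r₀ ≤ Jk k R / 72)
    {D : Set (EuclideanSpace ℝ (Fin d))} (hne : D.Nonempty)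
    (hD : ∀ x ∈ D, ∃ p : ℝ, 0 ≤ p ∧ p ≤ R ∧ ‖x - p • ev i‖ ≤ t) :
    Jk k R / (2592 * R) ≤ minE K D := by
  have hg := gk_cont hcont hrad i
  have hR0 : 0 < R := by linarith
  refine le_minE hne (fun μ hμ hμD => ?_)
  have h1 := Jk_double hg h0 hp hm (x := R / 2) (by linarith)
  rw [show 2 * (R / 2) = R by ring] at h1
  have h2 : Jk k (R / 2) ≤ Jk k (R / 2 + t) := Jk_mono hg (by linarith)
  have h3 := energy_lower hcont hrad hpd i h0 hp hm hR0 ht hJ (Q := Jk k R / 36) (by positivity)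
    (by linarith) μ (by
      have : ∀ᵐ x ∂μ, x ∈ D := hμD
      filter_upwards [this] with x hx using hD x hx)
  refine le_of_eq_of_le ?_ h3
  field_simp
  norm_num

lemma line_mem (i : Fin d) (hi : (i : ℕ) = 0) {S : Set ℝ} {x : EuclideanSpace ℝ (Fin d)} :
    x ∈ lineEmbed d S ↔ x i ∈ S ∧ x = (x i) • ev i := by
  unfold lineEmbed
  change (∀ j : Fin d, if (j : ℕ) = 0 then x j ∈ S else x j = 0) ↔ _
  constructor
  · intro h
    have h1 := h i
    rw [if_pos hi] at h1
    refine ⟨h1, ?_⟩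
    ext j
    by_cases hj : j = i
    · subst hj; simp [ev]
    · have h2 := h j
      rw [if_neg (fun h => hj (Fin.ext (h.trans hi.symm)))] at h2
      simp [ev, h2, hj]
  · rintro ⟨h1, h2⟩ j
    by_cases hj : j = i
    · subst hj; rw [if_pos hi]; exact h1
    · rw [if_neg (fun h => hj (Fin.ext (h.trans hi.symm))), h2]
      simp [ev, hj]

lemma line_upper (hcont : Continuous K) (hrad : ∀ x, K x = k ‖x‖) (hpd : IsPosDefKernel K)
    (i : Fin d) (hi : (i : ℕ) = 0) {R : ℝ} (hR : 0 < R) :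
    minE K (lineEmbed d (Set.Icc 0 R)) ≤ 2 * Jk k R / R := by
  have hZ : Measurable (fun u : ℝ => (R * u) • (ev i : EuclideanSpace ℝ (Fin d))) := by fun_prop
  have hKm : Measurable K := hcont.measurable
  have hpr := Measure.isProbabilityMeasure_map (μ := UU) hZ.aemeasurable
  refine (minE_le hcont hrad hpd (UU.map (fun u : ℝ => (R * u) • ev i)) hpr ?_).trans
    (le_of_eq_of_le ?_ (seg_energy hcont hrad hpd i hR))
  · have hae : ∀ᵐ x ∂(UU.map (fun u : ℝ => (R * u) • (ev i : EuclideanSpace ℝ (Fin d)))),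
        x ∈ lineEmbed d (Set.Icc 0 R) := by
      have hcl : MeasurableSet (lineEmbed d (Set.Icc 0 R)) := by
        have : lineEmbed d (Set.Icc 0 R) =
            {x | x i ∈ Set.Icc 0 R} ∩ {x | x = (x i) • ev i} := by
          ext x; rw [line_mem i hi]; rfl
        rw [this]
        refine MeasurableSet.inter ?_ ?_
        · exact (by fun_prop : Measurable (fun x : EuclideanSpace ℝ (Fin d) => x i))
            measurableSet_Icc
        · exact measurableSet_eq_fun measurable_id (by fun_prop)
      refine (ae_map_iff hZ.aemeasurable hcl).2 ?_
      filter_upwards [ae_restrict_mem (μ := volume) (measurableSet_Ioc (a := (0 : ℝ)) (b := 1))]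
        with u hu
      refine (line_mem i hi).2 ?_
      have e : ((R * u) • (ev i : EuclideanSpace ℝ (Fin d))) i = R * u := by simp [ev]
      rw [e]
      refine ⟨⟨by have := hu.1; positivity, ?_⟩, rfl⟩
      nlinarith [hu.2]
    exact hae
  · unfold energyE
    have hm1 : Measurable (fun x => ∫ y, K (x - y) ∂(UU.map (fun u : ℝ => (R * u) • ev i))) :=
      pot_meas (UU.map (fun u : ℝ => (R * u) • ev i)) hcont id id measurable_id measurable_id
    rw [integral_map hZ.aemeasurable hm1.stronglyMeasurable.aestronglyMeasurable]
    congr 1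
    funext u
    rw [integral_map hZ.aemeasurable]
    · exact (by fun_prop : Measurable
        (fun y => K ((R * u) • ev i - y))).aestronglyMeasurable

lemma cmp_line (hcont : Continuous K) (hrad : ∀ x, K x = k ‖x‖) (hpd : IsPosDefKernel K)
    (i : Fin d) (hi : (i : ℕ) = 0) {r₀ : ℝ} (h0 : 0 < r₀) (hp : ∀ x, r₀ ≤ x → 0 < k x)
    {R δ β r s Λ M : ℝ} (hR : 0 < R) (hδ : 0 < δ) (hβ : 0 < β) (hr : 0 < r)
    (hs : 0 < s) (hsr : s ≤ r) (hΛ : 0 < Λ) (hM : 0 ≤ M)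
    (n : ℕ) (hn : ((1 + δ) * R) / (β * r) < n)
    (c : Fin n → EuclideanSpace ℝ (Fin d))
    (hsep : ∀ i j : Fin n, |(i : ℝ) - (j : ℝ)| * r ≤ ‖c i - c j‖)
    (hcmp : ∀ τ z : ℝ, M * r ≤ τ → τ / β - 2 * r ≤ z → k z ≤ Λ * k τ) :
    minE K (⋃ j : Fin n, Metric.closedBall (c j) s) ≤
      Λ * (minE K (lineEmbed d (Set.Icc 0 R)) + K 0 * (r₀ * (2 / (δ * R))))
        + 2 * Jk k s / s * (M * r * (2 / (δ * R))) := by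
  set κ := K 0 * (r₀ * (2 / (δ * R)))
  set E := 2 * Jk k s / s * (M * r * (2 / (δ * R)))
  have hne : (lineEmbed d (Set.Icc 0 R)).Nonempty := by
    refine ⟨0, (line_mem i hi).2 ⟨?_, by simp⟩⟩
    simp [hR.le]
  have key : (minE K (⋃ j : Fin n, Metric.closedBall (c j) s) - E) / Λ - κ
      ≤ minE K (lineEmbed d (Set.Icc 0 R)) := by
    refine le_minE hne (fun μ hμ hμD => ?_)
    have hae : ∀ᵐ x ∂μ, x ∈ lineEmbed d (Set.Icc 0 R) := hμD
    obtain ⟨ν, v1, v2, v3⟩ := ub2 μ hcont hrad hpd i h0 hp hR hδ hβ hr hs hsr hΛ.le hM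
      (by
        filter_upwards [hae] with x hx
        have := (line_mem i hi).1 hx
        exact ⟨this.1.1, this.1.2, this.2⟩) n hn c hsep hcmp
    have h1 := minE_le hcont hrad hpd ν v1 v2
    have h2 := h1.trans v3
    rw [sub_le_iff_le_add, div_le_iff₀ hΛ]
    linarith
  rw [sub_le_iff_le_add, div_le_iff₀ hΛ] at key
  linarith

lemma cmp_ev {α η : ℝ} (hη : 0 < η) (hα1 : α ≤ 1) (hrv : RegularlyVarying k α)
    (hratio : ∀ ε : ℝ, 0 < ε → ∃ r₀ : ℝ, ∀ x y : ℝ, r₀ ≤ x → x ≤ y →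
      k y / k x - 1 ≤ ε) :
    ∃ X : ℝ, ∀ τ z : ℝ, X ≤ τ → (1 + η)⁻¹ * τ ≤ z → k z ≤ (1 + η) ^ 3 * k τ := by
  obtain ⟨r₁, h1, hp1, hm1⟩ := almost_mono (rv_pos hrv) hratio η hη
  have ha : 0 < (1 + η)⁻¹ := by positivity
  have hlt : (1 + η)⁻¹ ^ (-α) < (1 + η) ^ 2 := by
    rw [Real.inv_rpow (by positivity), Real.rpow_neg (by positivity), inv_inv]
    calc (1 + η) ^ α ≤ (1 + η) ^ (1 : ℝ) := Real.rpow_le_rpow_of_exponent_le (by linarith) hα1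
      _ = 1 + η := Real.rpow_one _
      _ < (1 + η) ^ 2 := by nlinarith
  obtain ⟨X, hX⟩ := eventually_atTop.1 (((rv_ratio hrv ha).eventually (gt_mem_nhds hlt)).and
    (rv_pos hrv))
  refine ⟨max X ((1 + η) * r₁), fun τ z hτ hz => ?_⟩
  obtain ⟨q1, q2⟩ := hX τ ((le_max_left _ _).trans hτ)
  have h3 : r₁ ≤ (1 + η)⁻¹ * τ := by
    rw [inv_mul_eq_div, le_div_iff₀ (by positivity)]
    linarith [(le_max_right _ _).trans hτ]
  have h4 := hm1 _ _ h3 hz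
  rw [div_lt_iff₀ q2] at q1
  calc k z ≤ (1 + η) * k ((1 + η)⁻¹ * τ) := h4
    _ ≤ (1 + η) * ((1 + η) ^ 2 * k τ) := by gcongr
    _ = _ := by ring

lemma config_pos (hcont : Continuous K) (hrad : ∀ x, K x = k ‖x‖) (hpd : IsPosDefKernel K)
    (i : Fin d) {r₀ : ℝ} (h0 : 0 < r₀) (hp : ∀ x, r₀ ≤ x → 0 < k x)
    (hm : ∀ x y : ℝ, r₀ ≤ x → x ≤ y → k y ≤ 2 * k x) (hJ : Tendsto (Jk k) atTop atTop)
    {D : Set (EuclideanSpace ℝ (Fin d))} (hne : D.Nonempty) (hb : Bornology.IsBounded D) :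
    0 < minE K D := by
  obtain ⟨B, hB⟩ := hb.exists_norm_le
  have hB0 : 0 ≤ B := by
    obtain ⟨x, hx⟩ := hne
    exact (norm_nonneg x).trans (hB x hx)
  obtain ⟨R, c1, c2, c3, c4⟩ := ((eventually_ge_atTop (4 * r₀)).and
    ((hJ.eventually_gt_atTop 0).and ((hJ.eventually_ge_atTop (36 * Jk k B)).and
      (hJ.eventually_ge_atTop (72 * (4 * K 0 * r₀)))))).exists
  have := tube_lower hcont hrad hpd i h0 hp hm c1 hB0 c2 (by linarith) (by linarith) hne
    (fun x hx => ⟨0, le_rfl, by linarith, by simpa using hB x hx⟩)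
  refine lt_of_lt_of_le ?_ this
  have : 0 < R := by linarith
  positivity
end fin

set_option maxHeartbeats 2000000

/-- under the stated conditions, for every `ε > 0` there is `ρ₀ ∈ (0,1)` such
that for every `ρ ∈ (ρ₀,1)`, the liminf as `R → ∞` of the infimum over admissible
collections of balls of `Cap_K(∪ᵢ Dᵢ) / Cap_K([0,R] × {0}^{d-1})` is at least `1 - ε`. -/
theorem statement13 (d : ℕ) (hd : 2 ≤ d)
    (K : EuclideanSpace ℝ (Fin d) → ℝ) (k : ℝ → ℝ)
    (hcont : Continuous K) (hrad : ∀ x, K x = k ‖x‖) (hpd : IsPosDefKernel K)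
    (α : ℝ) (hα0 : 0 ≤ α) (hα1 : α ≤ 1) (hrv : RegularlyVarying k α)
    (hcrit : α = 1 → ∃ γ : ℝ, γ < 1 ∧
      Tendsto (fun x => k x / (x⁻¹ * Real.log x ^ (-γ))) atTop (nhds 1))
    (hratio : ∀ ε : ℝ, 0 < ε → ∃ r₀ : ℝ, ∀ x y : ℝ, r₀ ≤ x → x ≤ y →
      k y / k x - 1 ≤ ε)
    (r s : ℝ → ℝ) (hr : Tendsto r atTop atTop) (hs : Tendsto s atTop atTop)
    (hsr : ∀ R : ℝ, 0 < R → s R ≤ r R ∧ r R ≤ R)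
    (hcase0 : α < 1 →
      ((fun R => r R) =o[atTop] (fun R : ℝ => R)) ∧
      ((fun R => r R * k (s R)) =o[atTop] (fun R => R * k R)))
    (hcase1 : α = 1 →
      (Tendsto (fun R => Real.log (max (r R) 2) / Real.log R) atTop (nhds 0)) ∧
      ((fun R => r R * k (s R) * Real.log (s R)) =o[atTop]
        (fun R => R * k R * Real.log R))) :
    ∀ ε : ℝ, 0 < ε → ∃ ρ₀ : ℝ, 0 < ρ₀ ∧ ρ₀ < 1 ∧ ∀ ρ : ℝ, ρ₀ < ρ → ρ < 1 →
      1 - ε ≤ Filter.liminf (fun R =>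
        sInf {q : ℝ | ∃ (n : ℕ) (c : Fin n → EuclideanSpace ℝ (Fin d)),
          Nat.floor (ρ * R / r R) ≤ n ∧
          (∀ i j : Fin n, |(i : ℝ) - (j : ℝ)| * r R ≤ ‖c i - c j‖) ∧
          q = capacityE K (⋃ i : Fin n, Metric.closedBall (c i) (s R)) /
                capacityE K (lineEmbed d (Set.Icc 0 R))}) atTop := by
  intro ε hε
  obtain ⟨r₀, h0, hp, hm'⟩ := almost_mono (rv_pos hrv) hratio 1 one_pos
  have hm : ∀ x y : ℝ, r₀ ≤ x → x ≤ y → k y ≤ 2 * k x := fun x y h1 h2 => by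
    have := hm' x y h1 h2
    linarith
  let i : Fin d := ⟨0, by omega⟩
  have hi : (i : ℕ) = 0 := rfl
  have hg := gk_cont hcont hrad i
  have hK0 := K_zero_nonneg hpd
  obtain ⟨hJ, hJs, hrR⟩ := asym hg h0 hp hm hα1 hrv hcrit r s hr hs hcase0 hcase1
  set η : ℝ := min 1 (ε / 14) with hηd
  have hη : 0 < η := lt_min one_pos (by positivity)
  have hη1 : η ≤ 1 := min_le_left _ _
  have hη2 : η ≤ ε / 14 := min_le_right _ _
  set Λ : ℝ := (1 + η) ^ 3 with hΛd
  have hΛ : 0 < Λ := by positivity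
  have hΛ2 : Λ ≤ 1 + ε / 2 := by
    have : Λ ≤ 1 + 7 * η := by
      rw [hΛd]
      nlinarith [mul_nonneg hη.le (sub_nonneg.2 hη1), mul_nonneg (mul_nonneg hη.le hη.le) (sub_nonneg.2 hη1)]
    linarith
  set β : ℝ := 1 + η / 2 with hβd
  have hβ : 0 < β := by positivity
  set δ : ℝ := η / 4 with hδd
  have hδ : 0 < δ := by positivity
  have hgap : 0 < β⁻¹ - (1 + η)⁻¹ := by
    rw [sub_pos]
    exact inv_strictAnti₀ hβ (by rw [hβd]; linarith)
  set M : ℝ := 2 / (β⁻¹ - (1 + η)⁻¹) with hMd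
  have hM : 0 < M := by positivity
  refine ⟨(1 + δ) / β, by positivity, by rw [div_lt_one hβ, hδd, hβd]; linarith, ?_⟩
  intro ρ hρ0 hρ1
  obtain ⟨X, hX⟩ := cmp_ev hη hα1 hrv hratio
  have hρ : 0 < ρ := lt_trans (by positivity) hρ0
  -- eventual facts
  have E1 := hr.eventually_ge_atTop (X / M)
  have E2 := hr.eventually_gt_atTop 0
  have E3 := hs.eventually_gt_atTop 0
  have E4 := hrR.def (show 0 < min (ρ - (1 + δ) / β) ρ from lt_min (by linarith) hρ)
  set ζ : ℝ := min (ε / 2 / 2592 / 2 / (4 * M / δ)) (1 / 36) with hζ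
  have hζ0 : 0 < ζ := lt_min (by positivity) (by norm_num)
  have E5 := hJs.def hζ0
  have E6 := hJ.eventually_ge_atTop ((Λ * (K 0 * r₀ * (2 / δ))) / (ε / 2 / 2592 / 2))
  have E7 := hJ.eventually_gt_atTop 0
  have E8 := hJ.eventually_ge_atTop (72 * (4 * K 0 * r₀))
  have E9 := eventually_ge_atTop (4 * r₀)
  have main : ∀ᶠ R in atTop, (∀ q ∈ {q : ℝ | ∃ (n : ℕ) (c : Fin n → EuclideanSpace ℝ (Fin d)),
          Nat.floor (ρ * R / r R) ≤ n ∧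
          (∀ i j : Fin n, |(i : ℝ) - (j : ℝ)| * r R ≤ ‖c i - c j‖) ∧
          q = capacityE K (⋃ i : Fin n, Metric.closedBall (c i) (s R)) /
                capacityE K (lineEmbed d (Set.Icc 0 R))}, 1 - ε ≤ q) ∧
      ∃ q ∈ {q : ℝ | ∃ (n : ℕ) (c : Fin n → EuclideanSpace ℝ (Fin d)),
          Nat.floor (ρ * R / r R) ≤ n ∧
          (∀ i j : Fin n, |(i : ℝ) - (j : ℝ)| * r R ≤ ‖c i - c j‖) ∧
          q = capacityE K (⋃ i : Fin n, Metric.closedBall (c i) (s R)) /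
                capacityE K (lineEmbed d (Set.Icc 0 R))}, q ≤ 5184 := by
    filter_upwards [E1, E2, E3, E4, E5, E6, E7, E8, E9] with R e1 e2 e3 e4 e5 e6 e7 e8 e9
    have hR : 0 < R := by linarith
    have hsR := (hsr R hR).1
    have hline : Jk k R / (2592 * R) ≤ minE K (lineEmbed d (Set.Icc 0 R)) := by
      refine tube_lower hcont hrad hpd i h0 hp hm e9 le_rfl e7 (by rw [Jk_zero]; positivity)
        (by linarith) ⟨0, (line_mem i hi).2 ⟨by simp [hR.le], by simp⟩⟩ ?_
      intro x hx
      have := (line_mem i hi).1 hx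
      refine ⟨x i, this.1.1, this.1.2, ?_⟩
      rw [← this.2, sub_self, norm_zero]
    have hlinepos : 0 < minE K (lineEmbed d (Set.Icc 0 R)) :=
      lt_of_lt_of_le (by positivity) hline
    rw [Real.norm_of_nonneg e2.le, Real.norm_of_nonneg hR.le] at e4
    have e4a : r R ≤ (ρ - (1 + δ) / β) * R :=
      e4.trans (mul_le_mul_of_nonneg_right (min_le_left _ _) hR.le)
    have e4b : r R ≤ ρ * R := e4.trans (mul_le_mul_of_nonneg_right (min_le_right _ _) hR.le)
    have hJs0 := Jk_nonneg hg e3.le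
    rw [Real.norm_of_nonneg (by positivity), Real.norm_of_nonneg e7.le] at e5
    have hfl : 1 ≤ Nat.floor (ρ * R / r R) := by
      rw [Nat.one_le_floor_iff, le_div_iff₀ e2]
      linarith
    constructor
    · rintro q ⟨n, c, hn, hsep, rfl⟩
      have hn1 : 0 < n := lt_of_lt_of_le hfl hn
      have hne : (⋃ i : Fin n, Metric.closedBall (c i) (s R)).Nonempty :=
        ⟨c ⟨0, hn1⟩, Set.mem_iUnion.2 ⟨⟨0, hn1⟩, Metric.mem_closedBall_self e3.le⟩⟩
      have hbd : Bornology.IsBounded (⋃ i : Fin n, Metric.closedBall (c i) (s R)) :=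
        Bornology.isBounded_iUnion.2 (fun j => Metric.isBounded_closedBall)
      have hpos := config_pos hcont hrad hpd i h0 hp hm hJ hne hbd
      have hnn : ((1 + δ) * R) / (β * r R) < n := by
        have a1 := Nat.lt_floor_add_one (ρ * R / r R)
        have a2 : ((Nat.floor (ρ * R / r R) : ℕ) : ℝ) ≤ n := by exact_mod_cast hn
        have a3 : ((1 + δ) * R) / (β * r R) + 1 ≤ ρ * R / r R := by
          rw [le_div_iff₀ e2]
          have : ((1 + δ) * R / (β * r R) + 1) * r R = (1 + δ) / β * R + r R := by
            field_simp
          rw [this]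
          linarith
        linarith
      have hc := cmp_line hcont hrad hpd i hi h0 hp hR hδ hβ e2 e3 hsR hΛ hM.le n hnn c hsep
        (by
          intro τ z hτ hz
          refine hX τ z ?_ (le_trans ?_ hz)
          · rw [div_le_iff₀ hM] at e1
            linarith
          · have : 2 * r R ≤ (β⁻¹ - (1 + η)⁻¹) * τ := by
              rw [hMd, div_mul_eq_mul_div, div_le_iff₀ hgap] at hτ
              linarith
            rw [div_eq_inv_mul]
            linarith)
      have herr : Λ * (K 0 * (r₀ * (2 / (δ * R))))
          + 2 * Jk k (s R) / s R * (M * r R * (2 / (δ * R))) ≤ ε / 2 * (Jk k R / (2592 * R)) := by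
        rw [div_le_iff₀ (by positivity)] at e6
        have e5' : r R / s R * Jk k (s R) * (4 * M / δ) ≤ ε / 2 / 2592 / 2 * Jk k R := by
          have : r R / s R * Jk k (s R) ≤ ε / 2 / 2592 / 2 / (4 * M / δ) * Jk k R :=
            e5.trans (mul_le_mul_of_nonneg_right (min_le_left _ _) e7.le)
          have h4 : 0 < 4 * M / δ := by positivity
          have e : ε / 2 / 2592 / 2 / (4 * M / δ) * Jk k R
              = (ε / 2 / 2592 / 2 * Jk k R) / (4 * M / δ) := div_mul_eq_mul_div _ _ _
          rw [e] at this
          exact (le_div_iff₀ h4).1 this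
        have : Λ * (K 0 * (r₀ * (2 / (δ * R))))
          + 2 * Jk k (s R) / s R * (M * r R * (2 / (δ * R)))
          = (Λ * (K 0 * r₀ * (2 / δ)) + r R / s R * Jk k (s R) * (4 * M / δ)) / R := by
          field_simp
          ring
        rw [this, div_le_iff₀ hR]
        have : ε / 2 * (Jk k R / (2592 * R)) * R = ε / 2 / 2592 * Jk k R := by
          field_simp
        rw [this]
        linarith
      have hfin : minE K (⋃ i : Fin n, Metric.closedBall (c i) (s R)) ≤
          (1 + ε) * minE K (lineEmbed d (Set.Icc 0 R)) := by
        have b1 := mul_le_mul_of_nonneg_right hΛ2 hlinepos.le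
        have b2 : ε / 2 * (Jk k R / (2592 * R)) ≤ ε / 2 * minE K (lineEmbed d (Set.Icc 0 R)) := by
          gcongr
        rw [mul_add] at hc
        linarith
      rw [cap_eq, cap_eq, inv_div_inv, le_div_iff₀ hpos]
      rcases le_or_gt (1 - ε) 0 with hh | hh
      · nlinarith
      · calc (1 - ε) * minE K (⋃ i : Fin n, Metric.closedBall (c i) (s R))
            ≤ (1 - ε) * ((1 + ε) * minE K (lineEmbed d (Set.Icc 0 R))) := by gcongr
          _ ≤ _ := by nlinarith [mul_pos (mul_pos hε hε) hlinepos]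
    · let n := Nat.floor (ρ * R / r R)
      let c : Fin n → EuclideanSpace ℝ (Fin d) := fun j => ((j : ℝ) * r R) • ev i
      refine ⟨_, ⟨n, c, le_rfl, ?_, rfl⟩, ?_⟩
      · intro a b
        simp only [c]
        rw [← sub_smul, norm_smul, ev_norm, mul_one, ← sub_mul, Real.norm_eq_abs, abs_mul,
          abs_of_pos e2]
      · have hn1 : 0 < n := hfl
        have hne : (⋃ i : Fin n, Metric.closedBall (c i) (s R)).Nonempty :=
          ⟨c ⟨0, hn1⟩, Set.mem_iUnion.2 ⟨⟨0, hn1⟩, Metric.mem_closedBall_self e3.le⟩⟩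
        have hlow : Jk k R / (2592 * R) ≤
            minE K (⋃ i : Fin n, Metric.closedBall (c i) (s R)) := by
          refine tube_lower hcont hrad hpd i h0 hp hm e9 e3.le e7 ?_ (by linarith) hne ?_
          · have x1 : Jk k (s R) ≤ r R / s R * Jk k (s R) := by
              refine le_mul_of_one_le_left hJs0 ?_
              rw [le_div_iff₀ e3]
              linarith
            have x2 : ζ * Jk k R ≤ 1 / 36 * Jk k R :=
              mul_le_mul_of_nonneg_right (min_le_right _ _) e7.le
            linarith
          · intro x hx
            obtain ⟨j, hj⟩ := Set.mem_iUnion.1 hx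
            refine ⟨(j : ℝ) * r R, by positivity, ?_, ?_⟩
            · have y1 : ((j : ℕ) : ℝ) ≤ n := by exact_mod_cast j.2.le
              have y2 : (n : ℝ) ≤ ρ * R / r R := Nat.floor_le (by positivity)
              have y3 := y1.trans y2
              rw [le_div_iff₀ e2] at y3
              nlinarith
            · rw [← dist_eq_norm]
              exact hj
        have hup := line_upper hcont hrad hpd i hi hR
        have hpos : 0 < minE K (⋃ i : Fin n, Metric.closedBall (c i) (s R)) :=
          lt_of_lt_of_le (by positivity) hlow
        rw [cap_eq, cap_eq, inv_div_inv, div_le_iff₀ hpos]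
        have : 2 * Jk k R / R = 5184 * (Jk k R / (2592 * R)) := by
          field_simp
          norm_num
        linarith
  refine le_liminf_of_le ?_ ?_
  · refine IsCoboundedUnder.of_frequently_le (a := (5184 : ℝ)) (Eventually.frequently ?_)
    filter_upwards [main] with R hR
    obtain ⟨h1, q, hq, hq2⟩ := hR
    exact (csInf_le ⟨1 - ε, fun y hy => h1 y hy⟩ hq).trans hq2
  · filter_upwards [main] with R hR
    obtain ⟨h1, q, hq, hq2⟩ := hR
    exact le_csInf ⟨q, hq⟩ h1
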